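/- arXiv:1312.1523 — 3 statements merged into one kernel-verified Lean document; each statement's English description precedes it below -/
import Mathlib

section
/- Let t and k be positive integers with t ≥ 7 and 2 ≤ k ≤ ⌊t/2⌋ − 1, and let N = (2^k − 1)·2^{t+1−k}. Then the broadcast function satisfies B(N) ≤ (k+1)·N − (2t − k + 4)·2^{k−1} + t − k + 2. (The bound equals (k+1)N − (t − k/2 + 2)·2^k + t − k + 2.) -/
/-- A broadcast protocol from originator `u` completing in `b` time units:
a nondecreasing sequence of informed sets `I 0 = {u}`, `I b = univ`, where at each
step every newly informed vertex is called by a distinct previously informed neighbor. -/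
def IsBroadcastProtocol {V : Type*} (G : SimpleGraph V) (u : V) (b : ℕ) : Prop :=
  ∃ I : ℕ → Set V,
    I 0 = {u} ∧
    (∀ i, I i ⊆ I (i + 1)) ∧
    I b = Set.univ ∧
    ∀ i, ∃ f : (I (i + 1) \ I i : Set V) → (I i : Set V),
      Function.Injective f ∧ ∀ v, G.Adj (f v) v

/-- The broadcast time `b(u)`: the minimum number of time units needed to broadcast
from `u` to all vertices. -/
noncomputable def broadcastTime {V : Type*} (G : SimpleGraph V) (u : V) : ℕ :=
  sInf {b | IsBroadcastProtocol G u b}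

/-- The broadcast function `B(n)`: the minimum number of edges of a broadcast graph on
`n` vertices, i.e. a connected graph in which every vertex can broadcast within
`⌈log₂ n⌉` time units. -/
noncomputable def broadcastFunction (n : ℕ) : ℕ :=
  sInf {m | ∃ G : SimpleGraph (Fin n), G.Connected ∧ G.edgeSet.ncard = m ∧
    ∀ u, broadcastTime G u ≤ Nat.clog 2 n}

/-!
In the Knödel graph of degree `k` on `2 * (2 ^ k - 1)` vertices, a broadcast is completed in
`k + 1` rounds by letting every informed vertex call along dimension `i` in round `i`, where the
dimension of the last round is again that of the first. Plant a binomial tree of order `d = t - k`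
at each vertex, and join each tree vertex to all `k` neighbours of one Knödel vertex, its role. In a
broadcast from a tree vertex, it acts in place of its role: after `k + 1` rounds all roots are
informed, and after `d` more all trees, which takes `t + 1 = ⌈log₂ N⌉` rounds in all. If the
children of a root take the role of its neighbour in dimension `0`, their tree edges are among the
joining edges, which saves `d` edges per tree. The tree edge missing at the root and the Knödel
edges, shared by their two ends, save `1 + k / 2` more edges per tree.
-/

/-- A broadcast of length `b` from `u`, recorded vertex by vertex: each `v ≠ u` is informed at
`time v` by `caller v`, and no vertex makes two calls at once. No graph is involved; see
`BroadcastSchedule.RunsOn`. The value `caller u` is irrelevant. -/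
structure BroadcastSchedule {V : Type*} (u : V) (b : ℕ) where
  caller : V → V
  time : V → ℕ
  time_originator : time u = 0
  time_caller_lt : ∀ v, v ≠ u → time (caller v) < time v
  eq_of_caller_eq : ∀ v w, v ≠ u → w ≠ u → time v = time w → caller v = caller w → v = w
  time_le : ∀ v, time v ≤ b

namespace BroadcastSchedule

variable {V W : Type*} {G : SimpleGraph V} {u : V} {b : ℕ} {S : BroadcastSchedule u b}

/-- The calls of the schedule are made along edges of `G`. -/
def RunsOn (S : BroadcastSchedule u b) (G : SimpleGraph V) : Prop :=
  ∀ v, v ≠ u → G.Adj (S.caller v) v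

theorem time_pos (S : BroadcastSchedule u b) {v : V} (hv : v ≠ u) : 0 < S.time v :=
  Nat.zero_lt_of_lt (S.time_caller_lt v hv)

theorem time_eq_zero_iff (S : BroadcastSchedule u b) {v : V} : S.time v = 0 ↔ v = u :=
  ⟨fun h => by_contra fun hv => (S.time_pos hv).ne' h, fun h => h ▸ S.time_originator⟩

theorem RunsOn.isBroadcastProtocol (h : S.RunsOn G) : IsBroadcastProtocol G u b := by
  have time_new {i : ℕ} (v : ({v | S.time v ≤ i + 1} \ {v | S.time v ≤ i} : Set V)) :
      S.time v = i + 1 :=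
    le_antisymm v.2.1 (Nat.succ_le_of_lt (Nat.lt_of_not_le v.2.2))
  have new_ne {i : ℕ} (v : ({v | S.time v ≤ i + 1} \ {v | S.time v ≤ i} : Set V)) : v.1 ≠ u :=
    fun hv => i.succ_ne_zero ((time_new v).symm.trans (S.time_eq_zero_iff.2 hv))
  refine ⟨fun i => {v | S.time v ≤ i}, ?_, fun i v hv => Nat.le_succ_of_le hv,
    Set.eq_univ_of_forall S.time_le, fun i => ⟨fun v => ⟨S.caller v, ?_⟩, fun v w hvw => ?_,
      fun v => h v (new_ne v)⟩⟩
  · ext v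
    exact Nat.le_zero.trans S.time_eq_zero_iff
  · exact Nat.lt_succ_iff.1 ((S.time_caller_lt v (new_ne v)).trans_eq (time_new v))
  · exact Subtype.ext (S.eq_of_caller_eq v w (new_ne v) (new_ne w)
      ((time_new v).trans (time_new w).symm) (congrArg Subtype.val hvw))

theorem RunsOn.broadcastTime_le (h : S.RunsOn G) : broadcastTime G u ≤ b :=
  Nat.sInf_le h.isBroadcastProtocol

theorem RunsOn.reachable (h : S.RunsOn G) (v : V) : G.Reachable u v := by
  by_cases hv : v = u
  · rw [hv]
  · exact (reachable h (S.caller v)).trans (h v hv).reachable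
termination_by S.time v
decreasing_by exact S.time_caller_lt v hv

/-- Transport of a schedule along a relabelling of the vertices. -/
def map (S : BroadcastSchedule u b) (e : V ≃ W) : BroadcastSchedule (e u) b where
  caller := e ∘ S.caller ∘ e.symm
  time := S.time ∘ e.symm
  time_originator := by simp [S.time_originator]
  time_caller_lt w hw := by
    simpa using S.time_caller_lt (e.symm w) (mt e.symm_apply_eq.1 hw)
  eq_of_caller_eq w w' hw hw' ht hc :=
    e.symm.injective <| S.eq_of_caller_eq _ _ (mt e.symm_apply_eq.1 hw) (mt e.symm_apply_eq.1 hw')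
      ht (e.injective hc)
  time_le w := S.time_le _

theorem RunsOn.map {H : SimpleGraph W} (h : S.RunsOn G) (e : G ≃g H) :
    (S.map e.toEquiv).RunsOn H := fun w hw => by
  have := e.map_adj_iff.2 (h (e.symm w) (mt e.toEquiv.symm_apply_eq.1 hw))
  rwa [e.apply_symm_apply] at this

end BroadcastSchedule

theorem broadcastFunction_card_le {V : Type*} [Finite V] [Nonempty V] (G : SimpleGraph V) {b : ℕ}
    (hb : b ≤ Nat.clog 2 (Nat.card V))
    (h : ∀ u, ∃ S : BroadcastSchedule u b, S.RunsOn G) :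
    broadcastFunction (Nat.card V) ≤ G.edgeSet.ncard := by
  let e : G ≃g G.map (Finite.equivFin V).toEmbedding := SimpleGraph.Iso.map (Finite.equivFin V) G
  obtain ⟨u₀⟩ := ‹Nonempty V›
  obtain ⟨S₀, hS₀⟩ := h u₀
  refine Nat.sInf_le ⟨_, e.connected_iff.1 (G.connected_iff_exists_forall_reachable.2
    ⟨u₀, hS₀.reachable⟩), (Set.ncard_congr' e.mapEdgeSet).symm, fun w => ?_⟩
  obtain ⟨u, rfl⟩ := e.surjective w
  obtain ⟨S, hS⟩ := h u
  exact (hS.map e).broadcastTime_le.trans hb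

/-- A dimensional broadcast scheme on the bipartite vertex set `Bool × A`, as for Knödel graphs:
`nbr i` matches the two sides, and in rounds `0, …, k` every informed vertex calls its neighbour
in the dimension of that round, dimension `k` being dimension `0` again. When `c` is the
originator, `q` is called in round `round c q`. This includes `q = c`, which is called as if it
were not informed: a substitute may then broadcast in place of `c`. -/
structure DimensionalScheme (A : Type*) (k : ℕ) where
  nbr : ℕ → Bool × A → Bool × A
  nbr_involutive : ∀ i, Function.Involutive (nbr i)
  nbr_fst : ∀ i q, (nbr i q).1 = !q.1
  nbr_periodic : Function.Periodic nbr k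
  round : Bool × A → Bool × A → ℕ
  round_le : ∀ c q, round c q ≤ k
  round_nbr_lt : ∀ c q, nbr (round c q) q ≠ c → round c (nbr (round c q) q) < round c q

namespace DimensionalScheme

variable {A T : Type*} {k d : ℕ} {r : T} (D : DimensionalScheme A k) (S : BroadcastSchedule r d)

open Classical in
/-- The vertex of `Bool × A` that `v` replaces when it is the originator of a broadcast in `graft`:
the one where its tree is planted, except that the children of a root replace the neighbour of that
root in dimension `0`. -/
noncomputable def role (v : (Bool × A) × T) : Bool × A :=
  if v.2 ≠ r ∧ S.caller v.2 = r then D.nbr 0 v.1 else v.1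

/-- The edge of `graft` joining `v` to the root at the neighbour of its role in dimension `i`. -/
noncomputable def link (v : (Bool × A) × T) (i : ℕ) : Sym2 ((Bool × A) × T) :=
  s(v, (D.nbr i (D.role S v), r))

/-- The graph obtained by planting at each vertex of `Bool × A` a copy of the tree underlying `S`,
and linking each vertex to the roots that its role is adjacent to. Tree edges at a root are left
out since they are already links in dimension `0`. -/
noncomputable def graft : SimpleGraph ((Bool × A) × T) :=
  SimpleGraph.fromEdgeSet (Set.range (Function.uncurry (D.link S)) ∪
    (fun v => s(v, (v.1, S.caller v.2))) '' (Set.univ ×ˢ {t | t ≠ r ∧ S.caller t ≠ r}))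

theorem role_root (q : Bool × A) : D.role S (q, r) = q := by
  simp [role]

theorem nbr_ne (i : ℕ) (q : Bool × A) : D.nbr i q ≠ q := fun h =>
  Bool.not_ne_self q.1 ((D.nbr_fst i q).symm.trans (congrArg Prod.fst h))

theorem graft_adj_link (v : (Bool × A) × T) (i : ℕ) :
    (D.graft S).Adj v (D.nbr i (D.role S v), r) := by
  refine (SimpleGraph.fromEdgeSet_adj _).2 ⟨Or.inl ⟨(v, i), rfl⟩, fun h => ?_⟩
  have hrole : D.role S v = D.nbr i (D.role S v) :=
    (congrArg (D.role S) h).trans (D.role_root S _)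
  exact D.nbr_ne i _ hrole.symm

theorem graft_adj_caller (q : Bool × A) {t : T} (ht : t ≠ r) :
    (D.graft S).Adj (q, t) (q, S.caller t) := by
  by_cases hr : S.caller t = r
  · have hrole : D.nbr 0 (D.role S (q, t)) = q := by
      rw [role, if_pos ⟨ht, hr⟩, D.nbr_involutive]
    have hlink := D.graft_adj_link S (q, t) 0
    rw [hrole] at hlink
    rwa [hr]
  · have hne : (q, t) ≠ (q, S.caller t) := fun h =>
      (S.time_caller_lt t ht).ne (congrArg S.time (Prod.ext_iff.1 h).2).symm
    exact (SimpleGraph.fromEdgeSet_adj _).2 ⟨Or.inr ⟨(q, t), ⟨Set.mem_univ _, ht, hr⟩, rfl⟩, hne⟩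

open Classical in
/-- The vertex that stands at place `q` of the scheme in the broadcast from `u`: the root there,
except that `u` replaces the root of its role. -/
noncomputable def place (u : (Bool × A) × T) (q : Bool × A) : (Bool × A) × T :=
  if q = D.role S u then u else (q, r)

theorem role_place (u : (Bool × A) × T) (q : Bool × A) : D.role S (D.place S u q) = q := by
  unfold place
  split_ifs with h
  · exact h.symm
  · exact D.role_root S q

theorem place_injective (u : (Bool × A) × T) : Function.Injective (D.place S u) :=
  Function.LeftInverse.injective (D.role_place S u)

open Classical in
/-- Informing times for the broadcast in `graft` from `u`: the scheme run from the role of `u`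
reaches all roots by time `k + 1`, and then all trees are informed in parallel. -/
noncomputable def graftTime (u v : (Bool × A) × T) : ℕ :=
  if v = u then 0 else
    if v.2 = r then D.round (D.role S u) v.1 + 1 else k + 1 + S.time v.2

open Classical in
/-- Callers for the broadcast in `graft` from `u`; see `graftTime`. -/
noncomputable def graftCaller (u v : (Bool × A) × T) : (Bool × A) × T :=
  if v.2 = r then D.place S u (D.nbr (D.round (D.role S u) v.1) v.1) else (v.1, S.caller v.2)

variable {D S} {u : (Bool × A) × T}

theorem graftTime_self : D.graftTime S u u = 0 :=
  if_pos rfl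

theorem graftTime_root {q : Bool × A} (h : (q, r) ≠ u) :
    D.graftTime S u (q, r) = D.round (D.role S u) q + 1 := by
  rw [graftTime, if_neg h, if_pos rfl]

theorem graftTime_of_ne {q : Bool × A} {t : T} (h : (q, t) ≠ u) (ht : t ≠ r) :
    D.graftTime S u (q, t) = k + 1 + S.time t := by
  rw [graftTime, if_neg h, if_neg ht]

theorem graftCaller_root (q : Bool × A) :
    D.graftCaller S u (q, r) = D.place S u (D.nbr (D.round (D.role S u) q) q) :=
  if_pos rfl

theorem graftCaller_of_ne (q : Bool × A) {t : T} (ht : t ≠ r) :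
    D.graftCaller S u (q, t) = (q, S.caller t) :=
  if_neg ht

theorem graftTime_root_le (q : Bool × A) : D.graftTime S u (q, r) ≤ k + 1 := by
  by_cases h : (q, r) = u
  · rw [h, graftTime_self]
    exact Nat.zero_le _
  · rw [graftTime_root h]
    exact Nat.succ_le_succ (D.round_le _ _)

theorem graftTime_le (v : (Bool × A) × T) : D.graftTime S u v ≤ k + 1 + d := by
  obtain ⟨q, t⟩ := v
  by_cases h : (q, t) = u
  · rw [h, graftTime_self]
    exact Nat.zero_le _
  by_cases ht : t = r
  · subst ht
    exact (graftTime_root_le q).trans (Nat.le_add_right _ _)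
  · rw [graftTime_of_ne h ht]
    exact Nat.add_le_add_left (S.time_le t) _

theorem graftTime_graftCaller_lt {v : (Bool × A) × T} (hv : v ≠ u) :
    D.graftTime S u (D.graftCaller S u v) < D.graftTime S u v := by
  suffices h : D.graftCaller S u v ≠ u →
      D.graftTime S u (D.graftCaller S u v) < D.graftTime S u v by
    by_cases hc : D.graftCaller S u v = u
    · rw [hc, graftTime_self, graftTime, if_neg hv]
      split_ifs <;> omega
    · exact h hc
  obtain ⟨q, t⟩ := v
  intro hc
  by_cases ht : t = r
  · subst ht
    rw [graftCaller_root, place] at hc ⊢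
    split_ifs at hc ⊢ with hrole
    · exact absurd rfl hc
    · rw [graftTime_root hc, graftTime_root hv]
      exact Nat.succ_lt_succ (D.round_nbr_lt _ _ hrole)
  · rw [graftCaller_of_ne q ht] at hc ⊢
    rw [graftTime_of_ne hv ht]
    by_cases hr : S.caller t = r
    · rw [hr]
      exact (graftTime_root_le q).trans_lt (Nat.lt_add_of_pos_right (S.time_pos ht))
    · rw [graftTime_of_ne hc hr]
      exact Nat.add_lt_add_left (S.time_caller_lt t ht) _

theorem eq_of_graftCaller_eq {v w : (Bool × A) × T} (hv : v ≠ u) (hw : w ≠ u)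
    (htime : D.graftTime S u v = D.graftTime S u w)
    (hcaller : D.graftCaller S u v = D.graftCaller S u w) : v = w := by
  have root_before_tree (q p : Bool × A) {t : T} (ht : t ≠ r) (h : (p, t) ≠ u) :
      D.graftTime S u (q, r) < D.graftTime S u (p, t) := by
    rw [graftTime_of_ne h ht]
    exact (graftTime_root_le q).trans_lt (Nat.lt_add_of_pos_right (S.time_pos ht))
  obtain ⟨q, t⟩ := v
  obtain ⟨p, s⟩ := w
  by_cases ht : t = r <;> by_cases hs : s = r
  · subst ht hs
    rw [graftTime_root hv, graftTime_root hw, Nat.add_right_cancel_iff] at htime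
    rw [graftCaller_root, graftCaller_root, htime] at hcaller
    rw [(D.nbr_involutive _).injective (D.place_injective S u hcaller)]
  · subst ht
    exact absurd htime (root_before_tree q p hs hw).ne
  · subst hs
    exact absurd htime (root_before_tree p q ht hv).ne'
  · rw [graftTime_of_ne hv ht, graftTime_of_ne hw hs, Nat.add_left_cancel_iff] at htime
    rw [graftCaller_of_ne q ht, graftCaller_of_ne p hs, Prod.mk.injEq] at hcaller
    exact Prod.ext hcaller.1 (S.eq_of_caller_eq t s ht hs htime hcaller.2)

variable (D S u) in
/-- The broadcast in `graft` from an arbitrary vertex `u`. -/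
noncomputable def graftSchedule : BroadcastSchedule u (k + 1 + d) where
  caller := D.graftCaller S u
  time := D.graftTime S u
  time_originator := graftTime_self
  time_caller_lt _ := graftTime_graftCaller_lt
  eq_of_caller_eq _ _ := eq_of_graftCaller_eq
  time_le := graftTime_le

theorem graftSchedule_runsOn : (D.graftSchedule S u).RunsOn (D.graft S) := by
  rintro ⟨q, t⟩ -
  change (D.graft S).Adj (D.graftCaller S u (q, t)) (q, t)
  by_cases ht : t = r
  · subst ht
    have hlink := D.graft_adj_link S (D.place S u (D.nbr (D.round (D.role S u) q) q))
      (D.round (D.role S u) q)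
    rwa [role_place, D.nbr_involutive, ← graftCaller_root] at hlink
  · rw [graftCaller_of_ne q ht]
    exact (D.graft_adj_caller S q ht).symm

theorem link_nbr_root (i : ℕ) (q : Bool × A) :
    D.link S (D.nbr i q, r) i = D.link S (q, r) i := by
  rw [link, link, role_root, role_root, D.nbr_involutive, Sym2.eq_swap]

theorem link_mod (v : (Bool × A) × T) (i : ℕ) : D.link S v (i % k) = D.link S v i := by
  rw [link, link, D.nbr_periodic.map_mod_nat]

variable (D S) in
theorem range_link_subset [NeZero k] :
    Set.range (Function.uncurry (D.link S)) ⊆ (fun p : _ × Fin k => D.link S p.1 p.2) ''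
      ((Set.range fun a : A => ((false, a), r))ᶜ ×ˢ Set.univ) := by
  rintro _ ⟨⟨v, i⟩, rfl⟩
  let j : Fin k := ⟨i % k, Nat.mod_lt i (NeZero.pos k)⟩
  have hj : D.link S v j = D.link S v i := link_mod v i
  by_cases hv : v ∈ Set.range fun a : A => ((false, a), r)
  · obtain ⟨a, rfl⟩ := hv
    refine ⟨((D.nbr j (false, a), r), j), ⟨?_, Set.mem_univ _⟩, (link_nbr_root _ _).trans hj⟩
    rintro ⟨a', h⟩
    exact Bool.false_ne_true ((congrArg (·.1.1) h).trans (D.nbr_fst j (false, a)))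
  · exact ⟨(v, j), ⟨hv, Set.mem_univ _⟩, hj⟩

variable [Finite A] [Finite T]

variable (D S) in
theorem ncard_range_link_add_le [NeZero k] :
    (Set.range (Function.uncurry (D.link S))).ncard + Nat.card A * k ≤
      2 * Nat.card A * Nat.card T * k := by
  let falseRoots := Set.range fun a : A => ((false, a), r)
  have hroots : falseRoots.ncard = Nat.card A :=
    Set.ncard_range_of_injective fun a a' h => (Prod.ext_iff.1 (Prod.ext_iff.1 h).1).2
  have hcompl : falseRoots.ncard + falseRootsᶜ.ncard = 2 * Nat.card A * Nat.card T := by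
    rw [Set.ncard_add_ncard_compl]
    simp
  have hlinks := calc
    (Set.range (Function.uncurry (D.link S))).ncard
      ≤ ((fun p : _ × Fin k => D.link S p.1 p.2) '' (falseRootsᶜ ×ˢ Set.univ)).ncard :=
        Set.ncard_le_ncard (D.range_link_subset S)
    _ ≤ (falseRootsᶜ ×ˢ (Set.univ : Set (Fin k))).ncard := Set.ncard_image_le
    _ = falseRootsᶜ.ncard * k := by simp [Set.ncard_prod]
  rw [← hcompl, hroots, add_mul]
  omega

variable (D S) in
theorem ncard_edgeSet_graft_add_le [NeZero k] :
    (D.graft S).edgeSet.ncard +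
        Nat.card A * (k + 2 * ({t | t ≠ r ∧ S.caller t = r}.ncard + 1)) ≤
      (k + 1) * (2 * Nat.card A * Nat.card T) := by
  let children := {t | t ≠ r ∧ S.caller t = r}
  let deep := {t | t ≠ r ∧ S.caller t ≠ r}
  have hdeep : deep.ncard + (children.ncard + 1) = Nat.card T := by
    have hcompl : (insert r children)ᶜ = deep := by
      ext t
      simp only [children, deep, Set.mem_compl_iff, Set.mem_insert_iff, Set.mem_ofPred_eq]
      tauto
    rw [← hcompl, ← Set.ncard_insert_of_notMem (fun h : r ∈ children => h.1 rfl), add_comm,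
      Set.ncard_add_ncard_compl]
  have htree : (Set.univ ×ˢ deep : Set ((Bool × A) × T)).ncard = 2 * Nat.card A * deep.ncard := by
    simp [Set.ncard_prod, Nat.card_prod]
  have hedges := calc
    (D.graft S).edgeSet.ncard
      ≤ (Set.range (Function.uncurry (D.link S)) ∪
          (fun v => s(v, (v.1, S.caller v.2))) '' (Set.univ ×ˢ deep)).ncard := by
        rw [graft, SimpleGraph.edgeSet_fromEdgeSet]
        exact Set.ncard_le_ncard Set.sdiff_subset
    _ ≤ (Set.range (Function.uncurry (D.link S))).ncard + 2 * Nat.card A * deep.ncard :=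
        (Set.ncard_union_le _ _).trans (Nat.add_le_add_left (htree ▸ Set.ncard_image_le) _)
  have hlinks := D.ncard_range_link_add_le S
  rw [← hdeep] at hlinks ⊢
  linarith

end DimensionalScheme

theorem two_pow_size_sub_one_le {n : ℕ} (hn : n ≠ 0) : 2 ^ (n.size - 1) ≤ n :=
  Nat.lt_size.1 (Nat.sub_lt (Nat.size_pos.2 (Nat.pos_of_ne_zero hn)) one_pos)

theorem lt_two_mul_two_pow_size_sub_one {n : ℕ} (hn : n ≠ 0) : n < 2 * 2 ^ (n.size - 1) :=
  (mul_pow_sub_one (Nat.size_pos.2 (Nat.pos_of_ne_zero hn)).ne' 2).symm ▸ n.lt_size_self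

theorem size_lt_size_of_lt_two_pow {m n : ℕ} (hn : n ≠ 0) (h : m < 2 ^ (n.size - 1)) :
    m.size < n.size :=
  (Nat.size_le.2 h).trans_lt (Nat.sub_lt (Nat.size_pos.2 (Nat.pos_of_ne_zero hn)) one_pos)

/-- The parent of `n` in the binomial tree with root `0`. -/
def clearTopBit (n : ℕ) : ℕ := n - 2 ^ (n.size - 1)

theorem clearTopBit_add {n : ℕ} (hn : n ≠ 0) : clearTopBit n + 2 ^ (n.size - 1) = n :=
  Nat.sub_add_cancel (two_pow_size_sub_one_le hn)

theorem size_clearTopBit_lt {n : ℕ} (hn : n ≠ 0) : (clearTopBit n).size < n.size := by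
  have := clearTopBit_add hn
  have := lt_two_mul_two_pow_size_sub_one hn
  exact size_lt_size_of_lt_two_pow hn (by omega)

theorem clearTopBit_eq_zero_iff {n : ℕ} (hn : n ≠ 0) : clearTopBit n = 0 ↔ ∃ i, n = 2 ^ i := by
  constructor
  · intro h
    exact ⟨n.size - 1, by simpa [h] using (clearTopBit_add hn).symm⟩
  · rintro ⟨i, rfl⟩
    rw [clearTopBit, Nat.size_pow, Nat.add_sub_cancel, Nat.sub_self]

/-- The broadcast from the root of the binomial tree of order `d`. -/
def binomialSchedule (d : ℕ) : BroadcastSchedule (0 : Fin (2 ^ d)) d where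
  caller j := ⟨clearTopBit j, (Nat.sub_le _ _).trans_lt j.2⟩
  time j := j.1.size
  time_originator := Nat.size_zero
  time_caller_lt _ hj := size_clearTopBit_lt (Fin.val_ne_zero_iff.2 hj)
  eq_of_caller_eq i j hi hj hsize hcaller := by
    have hcaller : clearTopBit i = clearTopBit j := congrArg Fin.val hcaller
    rw [Fin.ext_iff, ← clearTopBit_add (Fin.val_ne_zero_iff.2 hi),
      ← clearTopBit_add (Fin.val_ne_zero_iff.2 hj), hcaller, hsize]
  time_le j := Nat.size_le.2 j.2

theorem ncard_children_binomialSchedule (d : ℕ) :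
    {j | j ≠ 0 ∧ (binomialSchedule d).caller j = 0}.ncard = d := by
  let power (i : Fin d) : Fin (2 ^ d) := ⟨2 ^ i.1, Nat.pow_lt_pow_right one_lt_two i.2⟩
  have hpower : Function.Injective power := fun i i' h =>
    Fin.ext (Nat.pow_right_injective le_rfl (Fin.ext_iff.1 h))
  have hrange : {j | j ≠ 0 ∧ (binomialSchedule d).caller j = 0} = Set.range power := by
    ext j
    constructor
    · rintro ⟨hj, hcaller⟩
      obtain ⟨i, hi⟩ :=
        (clearTopBit_eq_zero_iff (Fin.val_ne_zero_iff.2 hj)).1 (Fin.ext_iff.1 hcaller)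
      exact ⟨⟨i, (Nat.pow_lt_pow_iff_right one_lt_two).1 (hi ▸ j.2)⟩, Fin.ext hi.symm⟩
    · rintro ⟨i, rfl⟩
      have hne : (power i).1 ≠ 0 := (Nat.two_pow_pos i).ne'
      exact ⟨Fin.val_ne_zero_iff.1 hne, Fin.ext ((clearTopBit_eq_zero_iff hne).2 ⟨i, rfl⟩)⟩
  rw [hrange, Set.ncard_range_of_injective hpower, Nat.card_fin]

namespace Knodel

variable {M : ℕ}

/-- The neighbour of `q` in dimension `i` in the Knödel graph on `Bool × ZMod M`. The second side
is numbered backwards compared with the usual convention, which makes `nbr i` an involution. -/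
def nbr (i : ℕ) (q : Bool × ZMod M) : Bool × ZMod M := (!q.1, 2 ^ i - 1 - q.2)

/-- The position of `q` relative to `c`. It is chosen so that `nbr i` acts on it by the same
formula as on positions, whichever the sides of `c` and `q`. -/
def offset (c q : Bool × ZMod M) : ZMod M := if q.1 = c.1 then q.2 - c.2 else q.2 + c.2

/-- The representative of `offset c q` in `0, …, M - 1`, except that `c` itself has rank `M`. The
vertex `q` hears from `c` in the round given by the binary length of the rank. -/
def rank (c q : Bool × ZMod M) : ℕ := if q = c then M else (offset c q).val

theorem nbr_involutive (i : ℕ) : Function.Involutive (nbr (M := M) i) := fun q => by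
  simp [nbr]

theorem nbr_periodic {k : ℕ} (hM : M + 1 = 2 ^ k) : Function.Periodic (nbr (M := M)) k := by
  have two_pow_eq_one : (2 : ZMod M) ^ k = 1 := by
    simpa using congrArg (Nat.cast : ℕ → ZMod M) hM.symm
  intro i
  funext q
  rw [nbr, nbr, pow_add, two_pow_eq_one, mul_one]

theorem offset_nbr (c q : Bool × ZMod M) (i : ℕ) :
    offset c (nbr i q) = 2 ^ i - 1 - offset c q := by
  by_cases h : q.1 = c.1
  · have h' : (!q.1) ≠ c.1 := by simp [h]
    rw [offset, offset, if_pos h, nbr, if_neg h']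
    ring
  · have h' : (!q.1) = c.1 := Bool.not_eq.2 h
    rw [offset, offset, if_neg h, nbr, if_pos h']
    ring

theorem eq_of_offset_eq_zero {c q : Bool × ZMod M} (hside : q.1 = c.1) (h : offset c q = 0) :
    q = c := by
  rw [offset, if_pos hside, sub_eq_zero] at h
  exact Prod.ext hside h

variable [NeZero M]

theorem natCast_rank (c q : Bool × ZMod M) : (rank c q : ZMod M) = offset c q := by
  unfold rank
  split_ifs with h
  · simp [h, offset]
  · exact ZMod.natCast_zmod_val _

theorem rank_le (c q : Bool × ZMod M) : rank c q ≤ M := by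
  unfold rank
  split_ifs
  · exact le_rfl
  · exact (ZMod.val_lt _).le

theorem nbr_zero_of_rank_eq_zero {c q : Bool × ZMod M} (h : rank c q = 0) : nbr 0 q = c := by
  have hoffset : offset c q = 0 := by rw [← natCast_rank, h, Nat.cast_zero]
  have hne : q ≠ c := fun hq => NeZero.ne M (by rwa [rank, if_pos hq] at h)
  have hside : (nbr 0 q).1 = c.1 := Bool.not_eq.2 fun h' => hne (eq_of_offset_eq_zero h' hoffset)
  exact eq_of_offset_eq_zero hside (by rw [offset_nbr, hoffset, pow_zero, sub_self, sub_zero])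

/-- Calling in the dimension given by the length of the rank complements the binary digits of the
rank, and so makes it shorter. -/
theorem size_rank_nbr_lt {c q : Bool × ZMod M} (h : nbr (rank c q).size q ≠ c) :
    (rank c (nbr (rank c q).size q)).size < (rank c q).size := by
  set n := rank c q with hn
  have hn₀ : n ≠ 0 := fun h₀ => h (by rw [h₀, Nat.size_zero, nbr_zero_of_rank_eq_zero (hn ▸ h₀)])
  obtain ⟨m, hm⟩ : ∃ m, m + n + 1 = 2 ^ n.size :=
    ⟨2 ^ n.size - (n + 1), by have := n.lt_size_self; omega⟩
  have hmn : m < 2 ^ (n.size - 1) := by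
    have := two_pow_size_sub_one_le hn₀
    have := mul_pow_sub_one (Nat.size_pos.2 (Nat.pos_of_ne_zero hn₀)).ne' 2
    omega
  have hmM : m < M := hmn.trans_le ((two_pow_size_sub_one_le hn₀).trans (rank_le c q))
  have hcast : offset c (nbr n.size q) = m := by
    have : (m + n + 1 : ZMod M) = 2 ^ n.size := by exact_mod_cast congrArg Nat.cast hm
    rw [offset_nbr, ← natCast_rank, ← hn, ← this]
    ring
  have hrank : rank c (nbr n.size q) = m := by
    rw [rank, if_neg h, hcast, ZMod.val_cast_of_lt hmM]
  rw [hrank]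
  exact size_lt_size_of_lt_two_pow hn₀ hmn

/-- The Knödel graph of degree `k` on `2 * M` vertices, `M = 2 ^ k - 1`, with its dimensional
broadcast scheme. -/
def scheme {k : ℕ} (hM : M + 1 = 2 ^ k) : DimensionalScheme (ZMod M) k where
  nbr := nbr
  nbr_involutive := nbr_involutive
  nbr_fst _ _ := rfl
  nbr_periodic := nbr_periodic hM
  round c q := (rank c q).size
  round_le c q := Nat.size_le.2 (hM ▸ Nat.lt_succ_of_le (rank_le c q))
  round_nbr_lt _ _ := size_rank_nbr_lt

end Knodel

theorem broadcastFunction_add_le {k M : ℕ} (d : ℕ) (hk : 2 ≤ k) (hM : M + 1 = 2 ^ k) :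
    broadcastFunction (2 * M * 2 ^ d) + M * (k + 2 * (d + 1)) ≤
      (k + 1) * (2 * M * 2 ^ d) := by
  have four_le : 2 ^ 2 ≤ 2 ^ k := Nat.pow_le_pow_right two_pos hk
  have : NeZero k := ⟨by omega⟩
  have : NeZero M := ⟨by omega⟩
  have hcard : Nat.card ((Bool × ZMod M) × Fin (2 ^ d)) = 2 * M * 2 ^ d := by
    simp
  have hclog : k + 1 + d ≤ Nat.clog 2 (2 * M * 2 ^ d) := by
    have : 2 ^ (k + d) < 2 * M * 2 ^ d := by
      rw [pow_add]
      exact Nat.mul_lt_mul_of_pos_right (by omega) (Nat.two_pow_pos d)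
    have := (Nat.lt_clog_iff_pow_lt one_lt_two).2 this
    omega
  have hedges := (Knodel.scheme hM).ncard_edgeSet_graft_add_le (binomialSchedule d)
  rw [ncard_children_binomialSchedule, Nat.card_zmod, Nat.card_fin] at hedges
  have hle := broadcastFunction_card_le _ (hcard ▸ hclog) fun u =>
    ⟨(Knodel.scheme hM).graftSchedule (binomialSchedule d) u,
      DimensionalScheme.graftSchedule_runsOn⟩
  rw [hcard] at hle
  exact (Nat.add_le_add_right hle _).trans hedges

theorem broadcastFunction_le_of_N_general (t k N : ℕ) (hk : 2 ≤ k) (hkt : k ≤ t)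
    (hN : N = (2 ^ k - 1) * 2 ^ (t + 1 - k)) :
    (broadcastFunction N : ℤ) ≤ (k + 1) * N - (2 * t - k + 2) * (2 ^ k - 1) := by
  obtain ⟨d, rfl⟩ := Nat.exists_eq_add_of_le hkt
  obtain ⟨M, hM⟩ : ∃ M, M + 1 = 2 ^ k := ⟨2 ^ k - 1, Nat.sub_add_cancel Nat.one_le_two_pow⟩
  have hN' : N = 2 * M * 2 ^ d := by
    rw [hN, ← hM, Nat.add_sub_cancel, add_assoc, Nat.add_sub_cancel_left, pow_succ]
    ring
  have hbound : (broadcastFunction N + M * (k + 2 * (d + 1)) : ℤ) ≤ (k + 1) * N := by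
    exact_mod_cast hN' ▸ broadcastFunction_add_le d hk hM
  have hM' : (2 ^ k - 1 : ℤ) = M := by rw [sub_eq_iff_eq_add]; exact_mod_cast hM.symm
  rw [hM']
  push_cast
  linarith

theorem saving_le {t k : ℕ} (hk : k ≠ 0) (hkt : k ≤ t) :
    (2 * t - k + 4) * 2 ^ (k - 1) - (t - k + 2) ≤ (2 * t - k + 2) * (2 ^ k - 1 : ℤ) := by
  have one_le : (1 : ℤ) ≤ 2 ^ (k - 1) := one_le_pow₀ one_le_two
  have nonneg : (0 : ℤ) ≤ 2 * t - k := by omega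
  rw [← mul_pow_sub_one hk]
  linarith [mul_nonneg (sub_nonneg.2 one_le) nonneg, (Nat.cast_le (α := ℤ)).2 hkt]

/-- For `t ≥ 7`, `2 ≤ k ≤ ⌊t/2⌋ - 1` and `N = (2^k - 1)·2^(t+1-k)`, the broadcast function
satisfies `B(N) ≤ (k+1)·N - (2t - k + 4)·2^(k-1) + t - k + 2`
(which equals `(k+1)·N - (t - k/2 + 2)·2^k + t - k + 2`). -/
theorem broadcastFunction_le_of_N (t k N : ℕ) (ht : 7 ≤ t) (hk : 2 ≤ k)
    (hk' : k ≤ t / 2 - 1) (hN : N = (2 ^ k - 1) * 2 ^ (t + 1 - k)) :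
    (broadcastFunction N : ℤ) ≤
      (k + 1) * N - (2 * t - k + 4) * 2 ^ (k - 1) + t - k + 2 := by
  have hkt : k ≤ t := by omega
  linarith [broadcastFunction_le_of_N_general t k N hk hkt hN, saving_le (by omega : k ≠ 0) hkt]
end

section
/- Let t, k, n be positive integers with t ≥ 7, n odd, and 2 ≤ k ≤ ⌈t/2⌉ − 1, and let N = (2^k − 1)·2^{t+1−k}. Suppose 2^t < n < N. Set d = N − n, x = ⌊d / 2^{t+1−k}⌋, and p = ⌊log₂(x+1)⌋ if x > 0 and p = 0 if x = 0. Then the broadcast function satisfies B(n) ≤ (k + 1 − p)·n − (2t − k + 2p + 4)·2^{k−1} + t − k − (p − 2)·2^p. -/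
/-!
Write `k = p + q` and choose `q + P + m = t + 1`. The roots of the construction form a product of a
`q`-cube without its origin and a `P`-cube, and on each root hangs a binomial tree with `2 ^ m`
nodes. Any number of vertices that includes all roots and their children and is closed under taking
parents can be kept, which gives every `n` of the given range.

A broadcast spreads over the `q`-cube, then over the `P`-cube, then down the trees, one direction
per round. A vertex that is not a root is joined to the `q` hubs, the neighbours of the missing
origin, and takes over the role of the origin. A child of a root saves the edge to one hub, since
its parent can cover half of the `q`-cube. Hence a vertex is charged with at most `q + 1` edges, the
children of roots with `q`, and the roots only with half of their cube edges. The theorem is the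
case `P = p + 1` for `p ≤ 1` and `P = p + 3` for `p ≥ 2`.
-/

section CallRound
open scoped Finset

variable {V W : Type*} {G : SimpleGraph V} {u : V} {b : ℕ} {S S' T T' : Set V}

/-- One round of calls turns the informed set `S` into `T`: each vertex of `T \ S` is called by a
neighbour of its own in `S`. The caller map is total, only its values on `T \ S` matter. -/
def IsCallRound (G : SimpleGraph V) (S T : Set V) : Prop :=
  S ⊆ T ∧ ∃ f : V → V, Set.InjOn f (T \ S) ∧ ∀ v ∈ T \ S, f v ∈ S ∧ G.Adj (f v) v

/-- `b` rounds of calls started by `u` can inform exactly the set `S`. -/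
inductive CanInform (G : SimpleGraph V) (u : V) : ℕ → Set V → Prop
  | zero : CanInform G u 0 {u}
  | succ {b : ℕ} {S T : Set V} :
      CanInform G u b S → IsCallRound G S T → CanInform G u (b + 1) T

theorem IsCallRound.refl (G : SimpleGraph V) (S : Set V) : IsCallRound G S S :=
  ⟨subset_rfl, id, by simp⟩

theorem IsCallRound.union (h : IsCallRound G S T) (h' : IsCallRound G S' T')
    (hdisj : Disjoint S S') : IsCallRound G (S ∪ S') (T ∪ T') := by
  classical
  obtain ⟨hST, f, hf, hfS⟩ := h
  obtain ⟨hST', f', hf', hfS'⟩ := h'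
  have cases_mem : ∀ v ∈ (T ∪ T') \ (S ∪ S'), v ∈ T \ S ∨ v ∉ T \ S ∧ v ∈ T' \ S' := by
    rintro v ⟨hT, hS⟩
    simp only [Set.mem_union, Set.mem_sdiff] at *
    tauto
  refine ⟨Set.union_subset_union hST hST', fun v => if v ∈ T \ S then f v else f' v, ?_, ?_⟩
  · intro v hv w hw hvw
    rcases cases_mem v hv with hv | ⟨hv, hv'⟩ <;> rcases cases_mem w hw with hw | ⟨hw, hw'⟩
    · simp only [if_pos hv, if_pos hw] at hvw
      exact hf hv hw hvw
    · simp only [if_pos hv, if_neg hw] at hvw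
      exact absurd hvw (hdisj.ne_of_mem (hfS v hv).1 (hfS' w hw').1)
    · simp only [if_neg hv, if_pos hw] at hvw
      exact absurd hvw.symm (hdisj.ne_of_mem (hfS w hw).1 (hfS' v hv').1)
    · simp only [if_neg hv, if_neg hw] at hvw
      exact hf' hv' hw' hvw
  · intro v hv
    rcases cases_mem v hv with hv | ⟨hv, hv'⟩
    · simp only [if_pos hv]
      exact ⟨Or.inl (hfS v hv).1, (hfS v hv).2⟩
    · simp only [if_neg hv]
      exact ⟨Or.inr (hfS' v hv').1, (hfS' v hv').2⟩

theorem IsCallRound.insert_of_adj {v : V} (hu : u ∈ S) (h : G.Adj u v) :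
    IsCallRound G S (insert v S) := by
  have eq_of_mem : ∀ w ∈ insert v S \ S, w = v := fun w hw => hw.1.resolve_right hw.2
  refine ⟨Set.subset_insert v S, fun _ => u, fun w hw w' hw' _ => ?_, fun w hw => ⟨hu, ?_⟩⟩
  · rw [eq_of_mem w hw, eq_of_mem w' hw']
  · rwa [eq_of_mem w hw]

theorem IsCallRound.comap {e : W → V} (he : Function.Injective e) (h : IsCallRound G S T)
    (hS : S ⊆ Set.range e) : IsCallRound (G.comap e) (e ⁻¹' S) (e ⁻¹' T) := by
  obtain ⟨hST, f, hf, hfS⟩ := h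
  have exists_caller : ∀ w : W, ∃ w' : W, e w ∈ T \ S → e w' = f (e w) := by
    intro w
    by_cases hw : e w ∈ T \ S
    · exact (hS (hfS _ hw).1).imp fun w' hw' _ => hw'
    · exact ⟨w, fun h => absurd h hw⟩
  choose g hg using exists_caller
  refine ⟨Set.preimage_mono hST, g, fun v hv w hw hvw => he (hf hv hw ?_), fun v hv => ?_⟩
  · rw [← hg v hv, ← hg w hw, hvw]
  · rw [Set.mem_preimage, SimpleGraph.comap_adj, hg v hv]
    exact hfS _ hv

theorem CanInform.comap {e : W → V} (he : Function.Injective e) {w : W}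
    (h : CanInform G (e w) b S) (hS : S ⊆ Set.range e) :
    CanInform (G.comap e) w b (e ⁻¹' S) := by
  induction h with
  | zero =>
    have : e ⁻¹' {e w} = {w} := Set.ext fun _ => he.eq_iff
    exact this ▸ .zero
  | succ _ hround ih =>
    have hS' := hround.1.trans hS
    exact .succ (ih hS') (hround.comap he hS')

theorem CanInform.exists_seq (h : CanInform G u b S) :
    ∃ I : ℕ → Set V, I 0 = {u} ∧ I b = S ∧ ∀ i, IsCallRound G (I i) (I (i + 1)) := by
  induction h with
  | zero => exact ⟨fun _ => {u}, rfl, rfl, fun _ => .refl G _⟩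
  | @succ b S T _ hround ih =>
    obtain ⟨I, hI0, hIb, hI⟩ := ih
    refine ⟨fun i => if i ≤ b then I i else T, by simp [hI0], by simp, fun i => ?_⟩
    rcases lt_trichotomy i b with hi | rfl | hi
    · simpa only [hi.le, Nat.succ_le_of_lt hi, if_true] using hI i
    · simpa [hIb] using hround
    · simpa [show ¬ i ≤ b by omega, show ¬ i + 1 ≤ b by omega] using IsCallRound.refl G T

theorem CanInform.isBroadcastProtocol (h : CanInform G u b Set.univ) :
    IsBroadcastProtocol G u b := by
  obtain ⟨I, hI0, hIb, hI⟩ := h.exists_seq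
  refine ⟨I, hI0, fun i => (hI i).1, hIb, fun i => ?_⟩
  obtain ⟨-, f, hf, hfI⟩ := hI i
  exact ⟨fun v => ⟨f v, (hfI v v.2).1⟩,
    fun v w hvw => Subtype.ext (hf v.2 w.2 (congrArg Subtype.val hvw)), fun v => (hfI v v.2).2⟩

theorem IsBroadcastProtocol.reachable (h : IsBroadcastProtocol G u b) (v : V) :
    G.Reachable u v := by
  obtain ⟨I, hI0, -, hIb, hcall⟩ := h
  have reachable_of_mem : ∀ i, ∀ v ∈ I i, G.Reachable u v := by
    intro i
    induction i with
    | zero =>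
      intro v hv
      rw [hI0, Set.mem_singleton_iff] at hv
      rw [hv]
    | succ i ih =>
      intro v hv
      by_cases hvi : v ∈ I i
      · exact ih v hvi
      · obtain ⟨f, -, hadj⟩ := hcall i
        exact (ih _ (f ⟨v, hv, hvi⟩).2).trans (hadj ⟨v, hv, hvi⟩).reachable
  exact reachable_of_mem b v (hIb ▸ Set.mem_univ v)

theorem CanInform.iterate {α : Type*} [DecidableEq α] {I : Finset α → Set V}
    (h : CanInform G u b (I ∅)) (D : Finset α)
    (hround : ∀ a ∈ D, ∀ C ⊆ D, a ∉ C → IsCallRound G (I C) (I (insert a C))) :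
    CanInform G u (b + #D) (I D) := by
  induction D using Finset.induction_on with
  | empty => exact h
  | insert a C haC ih =>
    rw [Finset.card_insert_of_notMem haC]
    have informed : CanInform G u (b + #C) (I C) := ih fun a' ha' C' hC' =>
      hround a' (Finset.mem_insert_of_mem ha') C' (hC'.trans (Finset.subset_insert a C))
    exact informed.succ (hround a (Finset.mem_insert_self a C) C (Finset.subset_insert a C) haC)

theorem broadcastFunction_le_ncard_edgeSet {n : ℕ} (hn : 0 < n) (H : SimpleGraph (Fin n))
    (h : ∀ u, ∃ b ≤ Nat.clog 2 n, IsBroadcastProtocol H u b) :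
    broadcastFunction n ≤ H.edgeSet.ncard := by
  have : Nonempty (Fin n) := ⟨⟨0, hn⟩⟩
  refine Nat.sInf_le ⟨H, .mk fun u v => ?_, rfl, fun u => ?_⟩
  · obtain ⟨b, -, hb⟩ := h u
    exact hb.reachable v
  · obtain ⟨b, hle, hb⟩ := h u
    exact (Nat.sInf_le hb).trans hle

theorem ncard_edgeSet_comap_le_sum_card [Fintype W] (e : W ↪ V) {out : V → Finset V}
    (hout : ∀ v w, G.Adj v w → w ∈ out v ∨ v ∈ out w) :
    (G.comap e).edgeSet.ncard ≤ ∑ w, #(out (e w)) := by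
  classical
  let E : Finset (Sym2 V) := Finset.univ.biUnion fun w => (out (e w)).image fun v => s(e w, v)
  have hE : Set.MapsTo (Sym2.map e) (G.comap e).edgeSet E := by
    intro a
    induction a using Sym2.ind with
    | _ x y =>
      intro hxy
      simp only [E, Sym2.map_mk, Finset.coe_biUnion, Set.mem_iUnion, Finset.mem_coe,
        Finset.mem_image]
      rcases hout _ _ hxy with h | h
      · exact ⟨x, Finset.mem_univ x, e y, h, rfl⟩
      · exact ⟨y, Finset.mem_univ y, e x, h, Sym2.eq_swap⟩
  calc (G.comap e).edgeSet.ncard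
      ≤ (E : Set (Sym2 V)).ncard :=
        Set.ncard_le_ncard_of_injOn _ hE (Sym2.map.injective e.injective).injOn
    _ = #E := Set.ncard_coe_finset E
    _ ≤ ∑ w, #(out (e w)) :=
        Finset.card_biUnion_le.trans (Finset.sum_le_sum fun _ _ => Finset.card_image_le)

theorem broadcastFunction_card_le_sum_card {A : Finset V} (hA : A.Nonempty)
    (hb : b ≤ Nat.clog 2 #A) (hinform : ∀ u ∈ A, CanInform G u b A) {out : V → Finset V}
    (hout : ∀ v w, G.Adj v w → w ∈ out v ∨ v ∈ out w) :
    broadcastFunction #A ≤ ∑ v ∈ A, #(out v) := by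
  let e : Fin #A ↪ V := A.equivFin.symm.toEmbedding.trans (.subtype _)
  have range_e : Set.range e = A := by
    ext v
    exact ⟨fun ⟨i, hi⟩ => hi ▸ (A.equivFin.symm i).2,
      fun hv => ⟨A.equivFin ⟨v, hv⟩, by simp [e]⟩⟩
  have protocol (i : Fin #A) : IsBroadcastProtocol (G.comap e) i b := by
    have := (hinform (e i) (A.equivFin.symm i).2).comap e.injective range_e.ge
    rw [← range_e, Set.preimage_range] at this
    exact this.isBroadcastProtocol
  calc broadcastFunction #A
      ≤ (G.comap e).edgeSet.ncard :=
        broadcastFunction_le_ncard_edgeSet hA.card_pos _ fun i => ⟨b, hb, protocol i⟩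
    _ ≤ ∑ i, #(out (e i)) := ncard_edgeSet_comap_le_sum_card e hout
    _ = ∑ v : A, #(out v) := Equiv.sum_comp A.equivFin.symm fun v : A => #(out v)
    _ = ∑ v ∈ A, #(out v) := A.sum_coe_sort fun v => #(out v)

end CallRound

section Finsets
open scoped Finset symmDiff

theorem symmDiff_singleton_eq_erase_or_insert {α : Type*} [DecidableEq α] (s : Finset α) (a : α) :
    (a ∈ s ∧ s ∆ {a} = s.erase a) ∨ (a ∉ s ∧ s ∆ {a} = insert a s) := by
  by_cases ha : a ∈ s
  · exact Or.inl ⟨ha, by grind [Finset.mem_symmDiff]⟩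
  · exact Or.inr ⟨ha, by grind [Finset.mem_symmDiff]⟩

theorem symmDiff_singleton_symmDiff_subset {α : Type*} [DecidableEq α] {s t D : Finset α} {a : α}
    (h : s ∆ t ⊆ insert a D) (h' : ¬ s ∆ t ⊆ D) : (s ∆ {a}) ∆ t ⊆ D := by
  have ha : a ∈ s ∆ t := by
    by_contra ha
    exact h' ((Finset.subset_insert_iff_of_notMem ha).1 h)
  rw [symmDiff_right_comm]
  intro x hx
  have := @h x
  grind [Finset.mem_symmDiff]

theorem exists_subset_card_eq_of_lt_imp_mem {α β : Type*} [LinearOrder β] (f : α → β)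
    (S : Finset α) {n : ℕ} (hn : n ≤ #S) :
    ∃ A ⊆ S, #A = n ∧ ∀ v ∈ A, ∀ w ∈ S, f w < f v → w ∈ A := by
  classical
  induction S using Finset.induction_on_max_value f with
  | empty => exact ⟨∅, subset_rfl, (Nat.le_zero.1 hn).symm, by simp⟩
  | insert a S haS hmax ih =>
    rcases hn.eq_or_lt with rfl | hlt
    · exact ⟨_, subset_rfl, rfl, fun _ _ w hw _ => hw⟩
    · rw [Finset.card_insert_of_notMem haS, Nat.lt_succ_iff] at hlt
      obtain ⟨A, hAS, hcard, hA⟩ := ih hlt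
      refine ⟨A, hAS.trans (Finset.subset_insert a S), hcard, fun v hv w hw hwv => ?_⟩
      rcases Finset.mem_insert.1 hw with rfl | hw
      · exact absurd hwv (hmax v (hAS hv)).not_gt
      · exact hA v hv w hw hwv

theorem two_mul_sum_card_compl (α : Type*) [Fintype α] [DecidableEq α] :
    2 * ∑ s : Finset α, #sᶜ = Fintype.card α * 2 ^ Fintype.card α := by
  have compl_involution : ∑ s : Finset α, #sᶜ = ∑ s : Finset α, #s :=
    Equiv.sum_comp (compl_involutive.toPerm compl) fun s : Finset α => #s
  calc 2 * ∑ s : Finset α, #sᶜ = ∑ s : Finset α, (#sᶜ + #s) := by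
        rw [Finset.sum_add_distrib, ← compl_involution, two_mul]
    _ = Fintype.card α * 2 ^ Fintype.card α := by
        simp [Finset.card_compl_add_card, mul_comm]

end Finsets

/-- The vertices of the construction. `(y, z, r)` lies in the binomial tree with root `(y, z, ∅)`,
and these roots form a product of two cubes, of dimensions `|ι|` and `|κ|`. -/
abbrev CubeForest (ι κ μ : Type*) := Finset ι × Finset κ × Finset μ

namespace CubeForest
open scoped Finset symmDiff

section Graph
variable {ι κ μ : Type*} [LinearOrder μ]

/-- The parent of a node `r` of the binomial tree on `Finset μ`: `r` without its maximum. -/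
def eraseMax (r : Finset μ) : Finset μ := {a ∈ r | ∃ b ∈ r, a < b}

theorem eraseMax_insert {a : μ} {r : Finset μ} (h : ∀ b ∈ r, b < a) :
    eraseMax (insert a r) = r := by
  ext c
  simp only [eraseMax, Finset.mem_filter, Finset.mem_insert, exists_eq_or_imp]
  constructor
  · rintro ⟨rfl | hc, h' | ⟨b, hb, hcb⟩⟩
    · exact absurd h' (lt_irrefl _)
    · exact absurd hcb (h b hb).asymm
    all_goals exact hc
  · exact fun hc => ⟨Or.inr hc, Or.inl (h c hc)⟩

variable [Fintype ι] [DecidableEq ι] [Fintype κ] [DecidableEq κ]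

/-- The neighbours charged to `v` in the edge count: a root is charged with its upward cube edges,
any other vertex with the edge to its parent and with its edges to the hubs `({i}, ∅, ∅)`.
A child of a root `(y, z, ∅)` is not joined to the hub of `pick y`. -/
def out (pick : Finset ι → ι) (v : CubeForest ι κ μ) : Finset (CubeForest ι κ μ) :=
  if v.2.2 = ∅ then
    (v.1ᶜ.image fun i => (insert i v.1, v.2.1, ∅)) ∪
      v.2.1ᶜ.image fun j => (v.1, insert j v.2.1, ∅)
  else
    insert (v.1, v.2.1, eraseMax v.2.2)
      (({i | #v.2.2 = 1 → i ≠ pick v.1} : Finset ι).image fun i => ({i}, ∅, ∅))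

/-- The graph of the construction: cubes on the roots, a binomial tree below each root, and edges
from the other vertices to the hubs. -/
def graph (pick : Finset ι → ι) : SimpleGraph (CubeForest ι κ μ) :=
  .fromRel fun v w => w ∈ out pick v

variable (pick : Finset ι → ι) (y : Finset ι) (z : Finset κ) {r : Finset μ}

theorem mem_out_or_mem_out_of_adj {pick : Finset ι → ι} (v w : CubeForest ι κ μ)
    (h : (graph pick).Adj v w) : w ∈ out pick v ∨ v ∈ out pick w :=
  ((SimpleGraph.fromRel_adj _ v w).1 h).2

theorem graph_adj_insert {a : μ} (h : ∀ b ∈ r, b < a) :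
    (graph pick).Adj (y, z, r) (y, z, insert a r) := by
  have ha : a ∉ r := fun har => (h a har).false
  refine (SimpleGraph.fromRel_adj _ _ _).2 ⟨?_, Or.inr ?_⟩
  · simpa using (Finset.insert_ne_self.2 ha).symm
  · simp [out, eraseMax_insert h]

variable {y} in
theorem graph_adj_hub {i : ι} (hr : r ≠ ∅) (hi : #r = 1 → i ≠ pick y) :
    (graph pick).Adj (y, z, r) ({i}, ∅, ∅) := by
  refine (SimpleGraph.fromRel_adj _ _ _).2 ⟨by simp [hr], Or.inl ?_⟩
  simpa [out, hr] using Or.inr hi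

theorem graph_adj_insert_left {i : ι} (hi : i ∉ y) :
    (graph pick : SimpleGraph (CubeForest ι κ μ)).Adj (y, z, ∅) (insert i y, z, ∅) := by
  refine (SimpleGraph.fromRel_adj _ _ _).2 ⟨?_, Or.inl ?_⟩
  · simpa using (Finset.insert_ne_self.2 hi).symm
  · simp only [out, if_true]
    exact Finset.mem_union_left _ (Finset.mem_image.2 ⟨i, Finset.mem_compl.2 hi, rfl⟩)

theorem graph_adj_insert_right {j : κ} (hj : j ∉ z) :
    (graph pick : SimpleGraph (CubeForest ι κ μ)).Adj (y, z, ∅) (y, insert j z, ∅) := by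
  refine (SimpleGraph.fromRel_adj _ _ _).2 ⟨?_, Or.inl ?_⟩
  · simpa using (Finset.insert_ne_self.2 hj).symm
  · simp only [out, if_true]
    exact Finset.mem_union_right _ (Finset.mem_image.2 ⟨j, Finset.mem_compl.2 hj, rfl⟩)

theorem graph_adj_flip_left (i : ι) :
    (graph pick : SimpleGraph (CubeForest ι κ μ)).Adj (y ∆ {i}, z, ∅) (y, z, ∅) := by
  rcases symmDiff_singleton_eq_erase_or_insert y i with ⟨hi, h⟩ | ⟨hi, h⟩ <;> rw [h]
  · simpa only [Finset.insert_erase hi] using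
      graph_adj_insert_left pick (y.erase i) z (Finset.notMem_erase i y)
  · exact (graph_adj_insert_left pick y z hi).symm

theorem graph_adj_flip_right (j : κ) :
    (graph pick : SimpleGraph (CubeForest ι κ μ)).Adj (y, z ∆ {j}, ∅) (y, z, ∅) := by
  rcases symmDiff_singleton_eq_erase_or_insert z j with ⟨hj, h⟩ | ⟨hj, h⟩ <;> rw [h]
  · simpa only [Finset.insert_erase hj] using
      graph_adj_insert_right pick y (z.erase j) (Finset.notMem_erase j z)
  · exact (graph_adj_insert_right pick y z hj).symm

end Graph

section Subcube
variable {ι κ μ : Type*} [DecidableEq ι] {y₀ : Finset ι} {z₀ : Finset κ}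

/-- The roots `(y, z₀, ∅)` for which `y` differs from `y₀` only in directions of `D`. -/
def subcube (y₀ : Finset ι) (z₀ : Finset κ) (D : Finset ι) : Set (CubeForest ι κ μ) :=
  {v | v.1.Nonempty ∧ v.1 ∆ y₀ ⊆ D ∧ v.2 = (z₀, ∅)}

theorem subcube_empty (hy : y₀.Nonempty) :
    (subcube y₀ z₀ ∅ : Set (CubeForest ι κ μ)) = {(y₀, z₀, ∅)} := by
  ext v
  simp only [subcube, Set.mem_singleton_iff, Set.mem_ofPred_eq, Finset.subset_empty,
    Finset.symmDiff_eq_empty]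
  exact ⟨fun h => Prod.ext h.2.1 h.2.2, fun h => h ▸ ⟨hy, rfl, rfl⟩⟩

theorem subcube_empty_empty : (subcube ∅ z₀ ∅ : Set (CubeForest ι κ μ)) = ∅ := by
  refine Set.eq_empty_of_forall_notMem fun v hv => hv.1.ne_empty ?_
  exact Finset.symmDiff_eq_empty.1 (Finset.subset_empty.1 hv.2.1)

end Subcube

section Sections
variable {ι κ μ : Type*} [DecidableEq κ] {ζ : Finset ι → Finset κ}

/-- The roots `(y, z, ∅)` for which `z` differs from `ζ y` only in directions of `D`. -/
def sections (ζ : Finset ι → Finset κ) (D : Finset κ) : Set (CubeForest ι κ μ) :=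
  {v | v.1.Nonempty ∧ v.2.1 ∆ ζ v.1 ⊆ D ∧ v.2.2 = ∅}

theorem mem_sections_empty {v : CubeForest ι κ μ} :
    v ∈ sections ζ ∅ ↔ v.1.Nonempty ∧ v.2 = (ζ v.1, ∅) := by
  simp only [sections, Set.mem_ofPred_eq, Finset.subset_empty, Finset.symmDiff_eq_empty,
    Prod.ext_iff]

end Sections

section Broadcast
variable {ι κ μ : Type*} [LinearOrder μ] [Fintype ι] [DecidableEq ι] [Fintype κ] [DecidableEq κ]
  {pick : Finset ι → ι} {u : CubeForest ι κ μ} {y₀ : Finset ι} {z₀ : Finset κ} {r₀ : Finset μ}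
  {b : ℕ}

/-- Sets of vertices that contain all roots (those with `y ≠ ∅`) and, with a vertex, its
parent. -/
structure IsSubforest (A : Set (CubeForest ι κ μ)) : Prop where
  nonempty_of_mem : ∀ v ∈ A, v.1.Nonempty
  root_mem : ∀ y z, y.Nonempty → (y, z, ∅) ∈ A
  parent_mem : ∀ y z r a, (∀ b ∈ r, b < a) → (y, z, insert a r) ∈ A → (y, z, r) ∈ A

theorem isCallRound_subcube {i j : ι} {D : Finset ι} (hi : i ∈ y₀) (hiD : i ∉ D) :
    IsCallRound (graph pick) (subcube y₀ z₀ D : Set (CubeForest ι κ μ))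
      (subcube y₀ z₀ (insert j D)) := by
  refine ⟨fun v hv => ⟨hv.1, hv.2.1.trans (Finset.subset_insert j D), hv.2.2⟩,
    fun v => (v.1 ∆ {j}, v.2), ?_, ?_⟩
  · rintro v - w - hvw
    simpa [Prod.ext_iff] using hvw
  · rintro ⟨y, w⟩ ⟨⟨hy, hyD, rfl⟩, hyD'⟩
    have flip_subset : (y ∆ {j}) ∆ y₀ ⊆ D :=
      symmDiff_singleton_symmDiff_subset hyD fun h => hyD' ⟨hy, h, rfl⟩
    have flip_nonempty : (y ∆ {j}).Nonempty := by
      rw [Finset.nonempty_iff_ne_empty]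
      rintro hempty
      rw [hempty, ← Finset.bot_eq_empty, bot_symmDiff] at flip_subset
      exact hiD (flip_subset hi)
    exact ⟨⟨flip_nonempty, flip_subset, rfl⟩, graph_adj_flip_left pick y z₀ j⟩

theorem isCallRound_insert_subcube {j : ι} {D : Finset ι} (hu : u.2.2 ≠ ∅)
    (hadj : (graph pick).Adj u ({j}, ∅, ∅)) :
    IsCallRound (graph pick) (insert u (subcube ∅ ∅ D)) (insert u (subcube ∅ ∅ (insert j D))) := by
  have mem_new : ∀ v ∈ insert u (subcube ∅ ∅ (insert j D)) \ insert u (subcube ∅ ∅ D),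
      v.1 ∆ {j} ∆ ∅ ⊆ D ∧ v.2 = (∅, ∅) := by
    rintro v ⟨rfl | ⟨hv, hvD, hv2⟩, hv'⟩
    · exact absurd (Or.inl rfl) hv'
    · exact ⟨symmDiff_singleton_symmDiff_subset hvD fun h => hv' (Or.inr ⟨hv, h, hv2⟩), hv2⟩
  refine ⟨Set.insert_subset_insert fun v hv => ?_,
    fun v => if v.1 = {j} then u else (v.1 ∆ {j}, v.2), ?_, ?_⟩
  · exact ⟨hv.1, hv.2.1.trans (Finset.subset_insert j D), hv.2.2⟩
  · intro v hv w hw hvw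
    have hv2 := (mem_new v hv).2
    have hw2 := (mem_new w hw).2
    refine Prod.ext ?_ (hv2.trans hw2.symm)
    by_cases hvj : v.1 = {j} <;> by_cases hwj : w.1 = {j}
    · exact hvj.trans hwj.symm
    · simp only [if_pos hvj, if_neg hwj] at hvw
      exact absurd (congrArg (·.2.2) hvw) (by simpa [hw2] using hu)
    · simp only [if_neg hvj, if_pos hwj] at hvw
      exact absurd (congrArg (·.2.2) hvw.symm) (by simpa [hv2] using hu)
    · simp only [if_neg hvj, if_neg hwj, Prod.mk.injEq] at hvw
      exact symmDiff_left_injective _ hvw.1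
  · rintro ⟨y, w⟩ hv
    obtain ⟨flip_subset, rfl⟩ := mem_new _ hv
    by_cases hy : y = {j}
    · simpa [hy] using hadj
    · simp only [if_neg hy]
      exact ⟨Or.inr ⟨Finset.symmDiff_nonempty.2 hy, flip_subset, rfl⟩,
        graph_adj_flip_left pick y ∅ j⟩

theorem isCallRound_sections {ζ : Finset ι → Finset κ} {j : κ} {D : Finset κ} :
    IsCallRound (graph pick) (insert u (sections ζ D)) (insert u (sections ζ (insert j D))) := by
  refine ⟨Set.insert_subset_insert fun v hv =>
      ⟨hv.1, hv.2.1.trans (Finset.subset_insert j D), hv.2.2⟩,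
    fun v => (v.1, v.2.1 ∆ {j}, v.2.2), ?_, ?_⟩
  · rintro v - w - hvw
    simpa [Prod.ext_iff] using hvw
  · rintro ⟨y, z, r⟩ ⟨rfl | ⟨hy, hyD, rfl⟩, hyD'⟩
    · exact absurd (Or.inl rfl) hyD'
    · exact ⟨Or.inr ⟨hy, symmDiff_singleton_symmDiff_subset hyD fun h =>
        hyD' (Or.inr ⟨hy, h, rfl⟩), rfl⟩, graph_adj_flip_right pick y z j⟩

theorem IsSubforest.isCallRound_insert {A : Set (CubeForest ι κ μ)} (hA : IsSubforest A) {a : μ}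
    {D : Finset μ} (ha : ∀ b ∈ D, b < a) :
    IsCallRound (graph pick) (insert u {v ∈ A | v.2.2 ⊆ D})
      (insert u {v ∈ A | v.2.2 ⊆ insert a D}) := by
  have mem_new : ∀ v ∈ insert u {v ∈ A | v.2.2 ⊆ insert a D} \ insert u {v ∈ A | v.2.2 ⊆ D},
      v ∈ A ∧ v.2.2 ⊆ insert a D ∧ a ∈ v.2.2 := by
    rintro v ⟨rfl | ⟨hvA, hvD⟩, hv'⟩
    · exact absurd (Or.inl rfl) hv'
    · exact ⟨hvA, hvD, by_contra fun hav =>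
        hv' (Or.inr ⟨hvA, (Finset.subset_insert_iff_of_notMem hav).1 hvD⟩)⟩
  refine ⟨Set.insert_subset_insert fun v hv => ⟨hv.1, hv.2.trans (Finset.subset_insert a D)⟩,
    fun v => (v.1, v.2.1, v.2.2.erase a), ?_, ?_⟩
  · intro v hv w hw hvw
    simp only [Prod.mk.injEq] at hvw
    exact Prod.ext hvw.1 (Prod.ext hvw.2.1
      (Finset.erase_injOn' a (mem_new v hv).2.2 (mem_new w hw).2.2 hvw.2.2))
  · rintro ⟨y, z, r⟩ hv
    obtain ⟨hvA, hrD, har⟩ := mem_new _ hv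
    have erase_subset : r.erase a ⊆ D := Finset.subset_insert_iff.1 hrD
    have lt_of_mem : ∀ b ∈ r.erase a, b < a := fun b hb => ha b (erase_subset hb)
    have insert_eq : insert a (r.erase a) = r := Finset.insert_erase har
    exact ⟨Or.inr ⟨hA.parent_mem y z _ a lt_of_mem (insert_eq.symm ▸ hvA), erase_subset⟩,
      by simpa only [insert_eq] using graph_adj_insert pick y z lt_of_mem⟩

theorem canInform_of_root (hy : y₀.Nonempty) :
    CanInform (graph pick) (y₀, z₀, ∅) (Fintype.card ι)
      (sections (fun _ => z₀) ∅ : Set (CubeForest ι κ μ)) := by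
  obtain ⟨i, hi⟩ := hy
  -- Flipping `i ∈ y₀` only in the last round keeps every caller away from the missing origin.
  have all_but_one : CanInform (graph pick) (y₀, z₀, (∅ : Finset μ))
      (0 + #((Finset.univ : Finset ι).erase i)) (subcube y₀ z₀ (Finset.univ.erase i)) :=
    .iterate (subcube_empty ⟨i, hi⟩ ▸ .zero) _ fun j _ D hD _ =>
      isCallRound_subcube hi fun hiD => Finset.notMem_erase i _ (hD hiD)
  have hend : (sections (fun _ => z₀) ∅ : Set (CubeForest ι κ μ)) =
      subcube y₀ z₀ (insert i (Finset.univ.erase i)) := by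
    ext v
    rw [mem_sections_empty, Finset.insert_erase (Finset.mem_univ i)]
    simp [subcube]
  rw [hend, ← Finset.card_univ, ← Finset.card_erase_add_one (Finset.mem_univ i),
    ← zero_add #((Finset.univ : Finset ι).erase i)]
  exact all_but_one.succ (isCallRound_subcube hi (Finset.notMem_erase i _))

theorem canInform_of_two_le_card (hr : 2 ≤ #r₀) :
    CanInform (graph pick) (y₀, z₀, r₀) (Fintype.card ι)
      (insert (y₀, z₀, r₀) (sections (fun _ => ∅) ∅)) := by
  have hr₀ : r₀ ≠ ∅ := by rintro rfl; simp at hr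
  have hstart : CanInform (graph pick) (y₀, z₀, r₀) 0 (insert (y₀, z₀, r₀) (subcube ∅ ∅ ∅)) := by
    rw [subcube_empty_empty, insert_empty_eq]
    exact .zero
  have hend : (sections (fun _ => ∅) ∅ : Set (CubeForest ι κ μ)) = subcube ∅ ∅ Finset.univ := by
    ext v
    rw [mem_sections_empty]
    simp [subcube]
  rw [hend, ← Finset.card_univ, ← zero_add #Finset.univ]
  exact hstart.iterate (I := fun D => insert (y₀, z₀, r₀) (subcube ∅ ∅ D)) _ fun j _ D _ _ =>
    isCallRound_insert_subcube hr₀ (graph_adj_hub pick z₀ hr₀ (by omega))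

theorem exists_canInform_of_card_eq_one (hr : #r₀ = 1) (hpick : pick y₀ ∈ y₀) :
    ∃ ζ, CanInform (graph pick) (y₀, z₀, r₀) (Fintype.card ι)
      (insert (y₀, z₀, r₀) (sections ζ ∅)) := by
  obtain ⟨a, rfl⟩ := Finset.card_eq_one.1 hr
  set i := pick y₀
  set u : CubeForest ι κ μ := (y₀, z₀, {a})
  have hstart : CanInform (graph pick) u 1 (insert u (subcube ∅ ∅ ∅) ∪ subcube y₀ z₀ ∅) := by
    have parent_adj : (graph pick).Adj u (y₀, z₀, ∅) := by
      simpa [u] using (graph_adj_insert pick y₀ z₀ (r := ∅) (a := a) (by simp)).symm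
    rw [subcube_empty_empty, insert_empty_eq, subcube_empty ⟨i, hpick⟩, Set.union_comm,
      Set.singleton_union]
    exact .succ .zero (.insert_of_adj rfl parent_adj)
  -- `u` acts as the missing root `(∅, ∅, ∅)` and covers the `y` without `i`, its parent covers the
  -- `y` with `i`. Hence `u` never calls the hub of `i`.
  refine ⟨fun y => if i ∈ y then z₀ else ∅, ?_⟩
  have hend : insert u (sections (fun y => if i ∈ y then z₀ else ∅) ∅) =
      insert u (subcube ∅ ∅ (Finset.univ.erase i)) ∪ subcube y₀ z₀ (Finset.univ.erase i) := by
    rw [Set.insert_union]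
    congr 1
    ext v
    rw [mem_sections_empty]
    by_cases hv : i ∈ v.1 <;> simp [subcube, hv, Finset.subset_erase, Finset.mem_symmDiff, hpick, i]
  rw [hend, ← Finset.card_univ, ← Finset.card_erase_add_one (Finset.mem_univ i), add_comm]
  refine hstart.iterate (I := fun D => insert u (subcube ∅ ∅ D) ∪ subcube y₀ z₀ D) _
    fun j hj D hD _ => ?_
  have hiD : i ∉ D := fun hiD => Finset.notMem_erase i _ (hD hiD)
  have hub_adj : (graph pick).Adj u ({j}, ∅, ∅) :=
    graph_adj_hub pick z₀ (by simp) fun _ => Finset.ne_of_mem_erase hj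
  refine (isCallRound_insert_subcube (by simp [u]) hub_adj).union (isCallRound_subcube hpick hiD) ?_
  rw [Set.disjoint_left]
  rintro v (rfl | ⟨-, hv, -⟩) ⟨-, hv', hv2⟩
  · simp [u] at hv2
  · have : i ∈ v.1 := by_contra fun hiv => hiD (hv' (Finset.mem_symmDiff.2 (Or.inr ⟨hpick, hiv⟩)))
    exact hiD (hv (Finset.mem_symmDiff.2 (Or.inl ⟨this, Finset.notMem_empty i⟩)))

theorem exists_canInform_sections (hy : u.1.Nonempty) (hpick : pick u.1 ∈ u.1) :
    ∃ ζ, CanInform (graph pick) u (Fintype.card ι) (insert u (sections ζ ∅)) := by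
  obtain ⟨y, z, r⟩ := u
  obtain hr | hr | hr : #r = 0 ∨ #r = 1 ∨ 2 ≤ #r := by omega
  · obtain rfl := Finset.card_eq_zero.1 hr
    refine ⟨fun _ => z, ?_⟩
    rw [Set.insert_eq_of_mem (mem_sections_empty.2 ⟨hy, rfl⟩)]
    exact canInform_of_root hy
  · exact exists_canInform_of_card_eq_one hr hpick
  · exact ⟨_, canInform_of_two_le_card hr⟩

theorem IsSubforest.canInform_of_roots {A : Set (CubeForest ι κ μ)} (hA : IsSubforest A)
    (h : CanInform (graph pick) u b (insert u {v ∈ A | v.2.2 ⊆ ∅})) (D : Finset μ) :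
    CanInform (graph pick) u (b + #D) (insert u {v ∈ A | v.2.2 ⊆ D}) := by
  induction D using Finset.induction_on_max with
  | empty => exact h
  | insert a D ha ih =>
    rw [Finset.card_insert_of_notMem fun haD => (ha a haD).false]
    exact ih.succ (hA.isCallRound_insert ha)

theorem IsSubforest.canInform [Fintype μ] {A : Set (CubeForest ι κ μ)} (hA : IsSubforest A)
    (hpick : ∀ y, y.Nonempty → pick y ∈ y) (hu : u ∈ A) :
    CanInform (graph pick) u (Fintype.card ι + Fintype.card κ + Fintype.card μ) A := by
  have hu1 : u.1.Nonempty := hA.nonempty_of_mem u hu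
  obtain ⟨ζ, hsections⟩ := exists_canInform_sections hu1 (hpick _ hu1)
  have hroots : CanInform (graph pick) u (Fintype.card ι + Fintype.card κ)
      (insert u {v ∈ A | v.2.2 ⊆ ∅}) := by
    have roots_eq : {v ∈ A | v.2.2 ⊆ ∅} = sections ζ Finset.univ := by
      ext ⟨y, z, r⟩
      simp only [sections, Finset.subset_empty, Finset.subset_univ, Set.mem_ofPred_eq, true_and]
      refine and_congr_left ?_
      rintro rfl
      exact ⟨hA.nonempty_of_mem _, hA.root_mem y z⟩
    rw [roots_eq, ← Finset.card_univ (α := κ)]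
    exact hsections.iterate (I := fun D => insert u (sections ζ D)) _ fun _ _ _ _ _ =>
      isCallRound_sections
  have hall := hA.canInform_of_roots hroots Finset.univ
  simpa only [Finset.subset_univ, and_true, Set.ofPred_mem_eq, Set.insert_eq_of_mem hu,
    Finset.card_univ] using hall

end Broadcast

section Stars
variable {ι κ μ : Type*} [Fintype ι] [DecidableEq ι] [Fintype κ] [Fintype μ]

/-- The roots together with their children. -/
def stars [DecidableEq μ] : Finset (CubeForest ι κ μ) :=
  Finset.univ.erase ∅ ×ˢ Finset.univ ×ˢ insert ∅ (Finset.univ.powersetCard 1)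

theorem mem_stars [DecidableEq μ] {v : CubeForest ι κ μ} :
    v ∈ stars ↔ v.1.Nonempty ∧ #v.2.2 ≤ 1 := by
  simp [stars, Finset.nonempty_iff_ne_empty, Nat.le_one_iff_eq_zero_or_eq_one]

theorem card_stars [DecidableEq μ] : #(stars : Finset (CubeForest ι κ μ)) =
    (Fintype.card μ + 1) * ((2 ^ Fintype.card ι - 1) * 2 ^ Fintype.card κ) := by
  rw [stars, Finset.card_product, Finset.card_product, Finset.card_insert_of_notMem (by simp)]
  simp only [Finset.card_erase_of_mem (Finset.mem_univ _), Finset.card_univ, Fintype.card_finset,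
    Finset.card_powersetCard, Nat.choose_one_right]
  ring

theorem exists_isSubforest_card_eq [LinearOrder μ] {n : ℕ}
    (hn : #(stars : Finset (CubeForest ι κ μ)) ≤ n)
    (hn' : n ≤ (2 ^ Fintype.card ι - 1) * 2 ^ (Fintype.card κ + Fintype.card μ)) :
    ∃ A : Finset (CubeForest ι κ μ), IsSubforest (A : Set (CubeForest ι κ μ)) ∧ stars ⊆ A ∧
      #A = n := by
  let S : Finset (CubeForest ι κ μ) := Finset.univ.erase ∅ ×ˢ Finset.univ
  have mem_S {v : CubeForest ι κ μ} : v ∈ S ↔ v.1.Nonempty := by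
    simp [S, Finset.nonempty_iff_ne_empty]
  have card_S : #S = (2 ^ Fintype.card ι - 1) * 2 ^ (Fintype.card κ + Fintype.card μ) := by
    simp [S, pow_add]
  obtain ⟨A, hAS, rfl, hA⟩ := exists_subset_card_eq_of_lt_imp_mem (fun v => #v.2.2) S
    (hn'.trans_eq card_S.symm)
  have stars_subset : stars ⊆ A := by
    intro w hw
    by_contra hwA
    have hw' := mem_stars.1 hw
    have A_ssubset : A ⊂ stars := by
      refine (Finset.ssubset_iff_of_subset fun v hv => mem_stars.2 ⟨mem_S.1 (hAS hv), ?_⟩).2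
        ⟨w, hw, hwA⟩
      exact (not_lt.1 fun hlt => hwA (hA v hv w (mem_S.2 hw'.1) hlt)).trans hw'.2
    exact (Finset.card_lt_card A_ssubset).not_ge hn
  have nonempty_of_mem : ∀ v ∈ A, v.1.Nonempty := fun v hv => mem_S.1 (hAS hv)
  refine ⟨A, ⟨nonempty_of_mem, fun y z hy => stars_subset (mem_stars.2 ⟨hy, by simp⟩),
    fun y z r a ha hv => hA _ hv _ (mem_S.2 (nonempty_of_mem (y, z, insert a r) hv)) ?_⟩,
    stars_subset, rfl⟩
  exact Finset.card_lt_card (Finset.ssubset_insert fun har => (ha a har).false)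

end Stars

section Degree
variable {ι κ μ : Type*} [LinearOrder μ] [Fintype ι] [DecidableEq ι] [Fintype κ] [DecidableEq κ]
  (pick : Finset ι → ι) (y : Finset ι) (z : Finset κ) {r : Finset μ}

theorem card_out_root_le : #(out pick (y, z, (∅ : Finset μ))) ≤ #yᶜ + #zᶜ := by
  rw [out, if_pos rfl]
  exact (Finset.card_union_le _ _).trans (add_le_add Finset.card_image_le Finset.card_image_le)

theorem card_out_le_of_card_eq_one (hr : #r = 1) : #(out pick (y, z, r)) ≤ Fintype.card ι := by
  have hr' : r ≠ ∅ := by rintro rfl; simp at hr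
  have filter_eq : ({i | #r = 1 → i ≠ pick y} : Finset ι) = Finset.univ.erase (pick y) := by
    ext i
    simp [hr]
  rw [out, if_neg hr', filter_eq, ← Finset.card_univ,
    ← Finset.card_erase_add_one (Finset.mem_univ (pick y))]
  exact (Finset.card_insert_le _ _).trans (Nat.succ_le_succ Finset.card_image_le)

theorem card_out_le_of_ne_empty (hr : r ≠ ∅) : #(out pick (y, z, r)) ≤ Fintype.card ι + 1 := by
  rw [out, if_neg hr]
  exact (Finset.card_insert_le _ _).trans
    (Nat.succ_le_succ (Finset.card_image_le.trans (Finset.card_le_univ _)))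

variable [Fintype μ]

theorem sum_card_out_star_le :
    ∑ r ∈ insert ∅ (Finset.univ.powersetCard 1), #(out pick (y, z, (r : Finset μ))) ≤
      #yᶜ + #zᶜ + Fintype.card μ * Fintype.card ι := by
  rw [Finset.sum_insert (by simp)]
  refine add_le_add (card_out_root_le pick y z) ?_
  calc ∑ r ∈ Finset.univ.powersetCard 1, #(out pick (y, z, (r : Finset μ)))
      ≤ #(Finset.univ.powersetCard 1 : Finset (Finset μ)) • Fintype.card ι :=
        Finset.sum_le_card_nsmul _ _ _ fun r hr =>
          card_out_le_of_card_eq_one pick y z (Finset.mem_powersetCard.1 hr).2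
    _ = Fintype.card μ * Fintype.card ι := by simp

theorem two_mul_sum_card_out_stars_add_le {q P m : ℕ} (hq : Fintype.card ι = q)
    (hP : Fintype.card κ = P) (hm : Fintype.card μ = m) :
    2 * ∑ v ∈ (stars : Finset (CubeForest ι κ μ)), #(out pick v) + 2 * q * 2 ^ P ≤
      q * 2 ^ (q + P) + (2 ^ q - 1) * 2 ^ P * (P + 2 * m * q) := by
  let Y : Finset (Finset ι) := Finset.univ.erase ∅
  have card_Y : #Y = 2 ^ q - 1 := by simp [Y, hq]
  have sum_Y : 2 * ∑ y ∈ Y, #yᶜ + 2 * q = q * 2 ^ q := by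
    rw [← hq, ← two_mul_sum_card_compl, ← Finset.sum_erase_add _ _ (Finset.mem_univ ∅)]
    simp [Y, mul_add]
  have sum_κ : 2 * ∑ z : Finset κ, #zᶜ = P * 2 ^ P := by rw [← hP, two_mul_sum_card_compl]
  have sum_le : ∑ v ∈ (stars : Finset (CubeForest ι κ μ)), #(out pick v) ≤
      2 ^ P * ∑ y ∈ Y, #yᶜ + (2 ^ q - 1) * (∑ z : Finset κ, #zᶜ + 2 ^ P * (m * q)) :=
    calc ∑ v ∈ (stars : Finset (CubeForest ι κ μ)), #(out pick v)
        = ∑ y ∈ Y, ∑ z : Finset κ, ∑ r ∈ insert ∅ (Finset.univ.powersetCard 1),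
            #(out pick (y, z, (r : Finset μ))) := by
          rw [stars, Finset.sum_product]
          exact Finset.sum_congr rfl fun y _ => Finset.sum_product _ _ _
      _ ≤ ∑ y ∈ Y, ∑ z : Finset κ, (#yᶜ + #zᶜ + m * q) :=
          Finset.sum_le_sum fun y _ => Finset.sum_le_sum fun z _ =>
            hq ▸ hm ▸ sum_card_out_star_le pick y z
      _ = 2 ^ P * ∑ y ∈ Y, #yᶜ + (2 ^ q - 1) * (∑ z : Finset κ, #zᶜ + 2 ^ P * (m * q)) := by
          simp only [Finset.sum_add_distrib, Finset.sum_const, card_Y, Finset.card_univ,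
            Fintype.card_finset, smul_eq_mul, Finset.mul_sum, mul_add, add_assoc, hP]
  calc 2 * ∑ v ∈ (stars : Finset (CubeForest ι κ μ)), #(out pick v) + 2 * q * 2 ^ P
      ≤ 2 * (2 ^ P * ∑ y ∈ Y, #yᶜ + (2 ^ q - 1) * (∑ z : Finset κ, #zᶜ + 2 ^ P * (m * q))) +
          2 * q * 2 ^ P := by gcongr
    _ = 2 ^ P * (2 * ∑ y ∈ Y, #yᶜ + 2 * q) +
          (2 ^ q - 1) * (2 * ∑ z : Finset κ, #zᶜ + 2 ^ P * (2 * m * q)) := by ring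
    _ = q * 2 ^ (q + P) + (2 ^ q - 1) * 2 ^ P * (P + 2 * m * q) := by
        rw [sum_Y, sum_κ, pow_add]
        ring

theorem two_mul_sum_card_out_le {q P m : ℕ} (hq : Fintype.card ι = q)
    (hP : Fintype.card κ = P) (hm : Fintype.card μ = m) {A : Finset (CubeForest ι κ μ)}
    (hne : ∀ v ∈ A, v.1.Nonempty) (hstars : stars ⊆ A) :
    (2 * ∑ v ∈ A, #(out pick v) : ℤ) ≤
      2 * (q + 1) * #A - (2 ^ q - 1) * 2 ^ P * (2 * m + 2 - P) - q * 2 ^ (q + P) := by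
  have card_sdiff : (#(A \ stars) : ℤ) = #A - (m + 1) * ((2 ^ q - 1) * 2 ^ P) := by
    rw [Finset.cast_card_sdiff hstars, card_stars, hq, hP, hm]
    push_cast [Nat.one_le_two_pow]
    ring
  have sum_sdiff_le : ∑ v ∈ A \ stars, #(out pick v) ≤ #(A \ stars) * (q + 1) := by
    refine Finset.sum_le_card_nsmul _ _ _ fun ⟨y, z, r⟩ hv => ?_
    obtain ⟨hvA, hv⟩ := Finset.mem_sdiff.1 hv
    refine hq ▸ card_out_le_of_ne_empty pick y z ?_
    rintro rfl
    exact hv (mem_stars.2 ⟨hne _ hvA, by simp⟩)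
  have sum_stars_le := two_mul_sum_card_out_stars_add_le (κ := κ) (μ := μ) pick hq hP hm
  rw [← Finset.sum_sdiff hstars]
  zify [Nat.one_le_two_pow (n := q)] at sum_sdiff_le sum_stars_le
  rw [card_sdiff] at sum_sdiff_le
  push_cast
  rw [pow_add] at sum_stars_le ⊢
  linarith

end Degree

theorem two_mul_broadcastFunction_le {q P m n : ℕ} (hm : 3 ≤ m) (hn : 2 ^ (q + P + m) < 2 * n)
    (hn' : n ≤ (2 ^ q - 1) * 2 ^ (P + m)) :
    (2 * broadcastFunction n : ℤ) ≤
      2 * (q + 1) * n - (2 ^ q - 1) * 2 ^ P * (2 * m + 2 - P) - q * 2 ^ (q + P) := by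
  obtain ⟨l, rfl⟩ : ∃ l, m = l + 1 := ⟨m - 1, by omega⟩
  have pow_lt : 2 ^ (q + P + l) < n := by
    rw [← add_assoc, pow_succ'] at hn
    exact Nat.lt_of_mul_lt_mul_left hn
  have clog_le : q + P + (l + 1) ≤ Nat.clog 2 n := (Nat.lt_clog_iff_pow_lt one_lt_two).2 pow_lt
  have stars_le : (l + 1 + 1) * ((2 ^ q - 1) * 2 ^ P) ≤ n := by
    have le_two_pow : l + 1 + 1 ≤ 2 ^ l := by
      have two_le : 2 ≤ l := by omega
      obtain ⟨j, rfl⟩ := Nat.exists_eq_add_of_le two_le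
      have := Nat.lt_two_pow_self (n := j)
      rw [pow_add]
      omega
    calc (l + 1 + 1) * ((2 ^ q - 1) * 2 ^ P) ≤ 2 ^ l * (2 ^ q * 2 ^ P) := by
          gcongr
          exact Nat.sub_le _ _
      _ = 2 ^ (q + P + l) := by ring
      _ ≤ n := pow_lt.le
  have n_pos : 0 < n := (Nat.zero_le _).trans_lt pow_lt
  have : NeZero q := ⟨by rintro rfl; simp [n_pos.ne'] at hn'⟩
  obtain ⟨A, hA, hstars, rfl⟩ :=
    exists_isSubforest_card_eq (ι := Fin q) (κ := Fin P) (μ := Fin (l + 1))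
      (by simpa only [card_stars, Fintype.card_fin] using stars_le)
      (by simpa only [Fintype.card_fin] using hn')
  let pick : Finset (Fin q) → Fin q := fun y => Classical.epsilon (· ∈ y)
  have edges_le : (broadcastFunction #A : ℤ) ≤ ∑ v ∈ A, #(out pick v) := by
    refine mod_cast broadcastFunction_card_le_sum_card (Finset.card_pos.1 n_pos) clog_le
      (fun u hu => ?_) mem_out_or_mem_out_of_adj
    simpa only [Fintype.card_fin] using hA.canInform (fun _ => Classical.epsilon_spec) hu
  have := two_mul_sum_card_out_le pick (Fintype.card_fin q) (Fintype.card_fin P)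
    (Fintype.card_fin (l + 1)) hA.nonempty_of_mem hstars
  linarith

end CubeForest

section Parameters

theorem le_sub_mul_of_le_div_add_one {a e M n : ℕ} (hM : 0 < M) (hn : n ≤ (a - 1) * M)
    (he : e ≤ ((a - 1) * M - n) / M + 1) : n ≤ (a - e) * M := by
  have hle : (e - 1) * M ≤ (a - 1) * M - n :=
    (Nat.le_div_iff_mul_le hM).1 (Nat.sub_le_iff_le_add.2 he)
  have sub_le : a - 1 - (e - 1) ≤ a - e := by omega
  calc n ≤ (a - 1) * M - (e - 1) * M := by omega
    _ = (a - 1 - (e - 1)) * M := (Nat.sub_mul _ _ _).symm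
    _ ≤ (a - e) * M := by gcongr

theorem add_two_le_of_pow_lt {t k p n : ℕ} (hk : k ≤ t) (hn : 2 ^ t < n)
    (hn' : n ≤ (2 ^ k - 2 ^ p) * 2 ^ (t + 1 - k)) : p + 2 ≤ k := by
  by_contra! hlt
  have sub_le : 2 * (2 ^ k - 2 ^ p) ≤ 2 ^ k := by
    have : 2 ^ k ≤ 2 ^ (p + 1) := Nat.pow_le_pow_right two_pos (by omega)
    have := Nat.two_pow_pos k
    omega
  refine hn.not_ge (hn'.trans (Nat.le_of_mul_le_mul_left ?_ two_pos))
  calc 2 * ((2 ^ k - 2 ^ p) * 2 ^ (t + 1 - k)) = 2 * (2 ^ k - 2 ^ p) * 2 ^ (t + 1 - k) := by ring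
    _ ≤ 2 ^ k * 2 ^ (t + 1 - k) := by gcongr
    _ = 2 * 2 ^ t := by rw [← pow_add, ← pow_succ']; congr 1; omega

theorem exists_dimensions {p q t : ℕ} (hq : 2 ≤ q) (ht : 2 * (p + q) + 1 ≤ t) :
    ∃ P m : ℕ, 3 ≤ m ∧ q + P + m = t + 1 ∧
      ((2 * t - q + p + 4) * 2 ^ (p + q) - 2 * (t - p - q) + 2 * (p - 2) * 2 ^ p : ℤ) ≤
        (2 ^ q - 1) * 2 ^ P * (2 * m + 2 - P) + q * 2 ^ (q + P) := by
  obtain ⟨q, rfl⟩ := Nat.exists_eq_add_of_le hq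
  obtain ⟨s, rfl⟩ := Nat.exists_eq_add_of_le ht
  have ha : (4 : ℤ) ≤ 2 ^ (2 + q) := by
    rw [pow_add]
    linarith [one_le_pow₀ (one_le_two : (1 : ℤ) ≤ 2) (n := q)]
  obtain rfl | rfl | hp : p = 0 ∨ p = 1 ∨ 2 ≤ p := by omega
  · refine ⟨1, 3 + q + s, by omega, by omega, ?_⟩
    have nonneg : (0 : ℤ) ≤ 10 * q + 6 * s + 20 := by positivity
    push_cast
    linear_combination (3 * q + 2 * s + 6 : ℤ) * ha + nonneg
  · refine ⟨2, 4 + q + s, by omega, by omega, ?_⟩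
    have nonneg : (0 : ℤ) ≤ 9 * q + 5 * s + 2 := by positivity
    push_cast
    linear_combination (2 * (3 * q + 2 * s + 3) : ℤ) * ha + 2 * nonneg
  · refine ⟨p + 3, p + q + s + 1, by omega, by omega, ?_⟩
    have nonneg : (0 : ℤ) ≤
        2 ^ p * (68 * q + 2 * p + 40 * s + 44) + 2 * (q + p + s + 3) := by positivity
    push_cast
    linear_combination (2 ^ p * (21 * q + 3 * p + 14 * s + 12) : ℤ) * ha + nonneg

end Parameters

theorem broadcastFunction_le_of_n_odd_general {t k n p : ℕ} (hk : 2 * k + 1 ≤ t) (hn : 2 ^ t < n)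
    (hn' : n ≤ (2 ^ k - 2 ^ p) * 2 ^ (t + 1 - k)) :
    (broadcastFunction n : ℤ) ≤
      (k + 1 - p) * n - (2 * t - k + 2 * p + 4) * 2 ^ (k - 1) + t - k - (p - 2) * 2 ^ p := by
  have hpk : p + 2 ≤ k := add_two_le_of_pow_lt (by omega) hn hn'
  obtain ⟨q, rfl⟩ := Nat.exists_eq_add_of_le (show p ≤ k by omega)
  obtain ⟨P, m, hm, hdim, saving_le⟩ := exists_dimensions (q := q) (by omega) hk
  have hle : n ≤ (2 ^ q - 1) * 2 ^ (P + m) := by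
    refine hn'.trans_eq ?_
    rw [show P + m = p + (t + 1 - (p + q)) by omega, pow_add 2 p, pow_add 2 p, ← mul_assoc,
      Nat.sub_one_mul, mul_comm (2 ^ p)]
  have two_mul_le := CubeForest.two_mul_broadcastFunction_le hm (by rw [hdim, pow_succ']; omega) hle
  have two_mul_pow : (2 ^ (p + q) : ℤ) = 2 * 2 ^ (p + q - 1) := by
    rw [← pow_succ', Nat.sub_add_cancel (by omega)]
  rw [two_mul_pow] at saving_le
  push_cast
  linarith

/-- The odd case: for `t ≥ 7`, odd `n`, `2 ≤ k ≤ ⌈t/2⌉ - 1`, `N = (2^k - 1)·2^(t+1-k)` and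
`2^t < n < N`, with `d = N - n`, `x = ⌊d / 2^(t+1-k)⌋` and `p = ⌊log₂ (x+1)⌋` if `x > 0`
(and `p = 0` if `x = 0`), the broadcast function satisfies
`B(n) ≤ (k+1-p)·n - (2t - k + 2p + 4)·2^(k-1) + t - k - (p-2)·2^p`. -/
theorem broadcastFunction_le_of_n_odd (t k n N d x p : ℕ) (ht : 7 ≤ t) (hodd : Odd n)
    (hk : 2 ≤ k) (hk' : k ≤ (t + 1) / 2 - 1) (hN : N = (2 ^ k - 1) * 2 ^ (t + 1 - k))
    (hn1 : 2 ^ t < n) (hn2 : n < N)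
    (hd : d = N - n) (hx : x = d / 2 ^ (t + 1 - k))
    (hp : p = if 0 < x then Nat.log 2 (x + 1) else 0) :
    (broadcastFunction n : ℤ) ≤
      (k + 1 - p) * n - (2 * t - k + 2 * p + 4) * 2 ^ (k - 1) + t - k - (p - 2) * 2 ^ p := by
  have pow_le : 2 ^ p ≤ x + 1 := by
    split_ifs at hp
    · exact hp ▸ Nat.pow_log_le_self 2 x.succ_ne_zero
    · simp [hp]
  subst hN hd hx
  exact broadcastFunction_le_of_n_odd_general (by omega) hn1
    (le_sub_mul_of_le_div_add_one (by positivity) hn2.le pow_le)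
end

section
/- Let t and k be positive integers with t ≥ 7 and 2 ≤ k ≤ ⌊t/2⌋ − 1, and let N = (2^k − 1)·2^{t+1−k}. Then there exists a connected simple graph G on N vertices with exactly (k+1)·N − (2t − k + 4)·2^{k−1} + t − k + 2 edges such that every vertex u of G has broadcast time b(u) ≤ t + 1. -/
/-!
Take `2 ^ k - 1` copies of the binomial tree of order `m = t + 1 - k`, placed at the nonzero
vertices of a `k`-dimensional hypercube, and join every non-root vertex to the `k` neighbours of the
missing zero vertex. A non-root originator then plays the zero vertex, so `k` steps of binomial
broadcasting in the hypercube inform all the roots. A root needs no substitute: if the calls along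
the dimensions are ordered so that the zero vertex would be called last, it is a leaf of the
binomial tree. In the remaining `m` steps each root broadcasts down its own tree. A child of a root
can spare one of its `k` shortcuts, say to `{j}` with `j` in the position `p` of the root: it calls
`p` instead, and the half of the hypercube containing `j` is broadcast from `p`.
-/

open Finset
open scoped symmDiff

variable {V W α : Type*}

/-- A broadcast from `u` to the vertices of `S` in at most `b` steps, relayed by vertices of `S`
only, given by the time at which each vertex is informed and the neighbour that calls it. The values
of `time` and `caller` outside `S`, and of `caller` at `u`, are irrelevant. -/
structure CallSchedule (G : SimpleGraph V) (u : V) (S : Set V) (b : ℕ) where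
  time : V → ℕ
  caller : V → V
  time_source : time u = 0
  time_le : ∀ v ∈ S, time v ≤ b
  caller_mem : ∀ v ∈ S, v ≠ u → caller v ∈ S
  adj_caller : ∀ v ∈ S, v ≠ u → G.Adj (caller v) v
  time_caller_lt : ∀ v ∈ S, v ≠ u → time (caller v) < time v
  eq_of_same_call : ∀ v ∈ S, v ≠ u → ∀ w ∈ S, w ≠ u →
    time v = time w → caller v = caller w → v = w

namespace CallSchedule

variable {G : SimpleGraph V} {H : SimpleGraph W} {u : V} {S : Set V} {b : ℕ}

theorem reachable (s : CallSchedule G u S b) {v : V} (hv : v ∈ S) : G.Reachable u v := by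
  induction hn : s.time v using Nat.strong_induction_on generalizing v with
  | _ n ih =>
    by_cases hvu : v = u
    · rw [hvu]
    · exact (ih _ (hn ▸ s.time_caller_lt v hv hvu) (s.caller_mem v hv hvu) rfl).trans
        (s.adj_caller v hv hvu).reachable

theorem isBroadcastProtocol (s : CallSchedule G u Set.univ b) : IsBroadcastProtocol G u b := by
  have ne_of_time_pos {v : V} (hv : 0 < s.time v) : v ≠ u := by
    rintro rfl
    exact hv.ne' s.time_source
  have pos_of_ne {v : V} (hv : v ≠ u) : 0 < s.time v :=
    (s.time_caller_lt v trivial hv).pos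
  have time_new {i : ℕ} {v : V} (hv : v ∈ {v | s.time v ≤ i + 1} \ {v | s.time v ≤ i}) :
      s.time v = i + 1 :=
    le_antisymm hv.1 (Nat.not_le.1 hv.2)
  refine ⟨fun i => {v | s.time v ≤ i}, ?_, fun i v hv => Nat.le_succ_of_le hv,
    Set.eq_univ_of_forall fun v => s.time_le v trivial, fun i => ?_⟩
  · ext v
    refine ⟨fun hv => ?_, fun hv => ?_⟩
    · by_contra hvu
      exact (pos_of_ne hvu).not_ge hv
    · rw [hv]
      exact s.time_source.le
  · have ne_source (v : ({v | s.time v ≤ i + 1} \ {v | s.time v ≤ i} : Set V)) : v.1 ≠ u :=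
      ne_of_time_pos (by rw [time_new v.2]; exact i.succ_pos)
    refine ⟨fun v => ⟨s.caller v, ?_⟩, fun v w hvw => Subtype.ext ?_, fun v => ?_⟩
    · exact Nat.lt_succ_iff.1 ((s.time_caller_lt v trivial (ne_source v)).trans_eq (time_new v.2))
    · exact s.eq_of_same_call v trivial (ne_source v) w trivial (ne_source w)
        ((time_new v.2).trans (time_new w.2).symm) (congrArg Subtype.val hvw)
    · exact s.adj_caller v trivial (ne_source v)

theorem broadcastTime_le (s : CallSchedule G u Set.univ b) : broadcastTime G u ≤ b :=
  Nat.sInf_le s.isBroadcastProtocol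

/-- Transport of a call schedule along a graph isomorphism. -/
def map (e : G ≃g H) (s : CallSchedule G u S b) : CallSchedule H (e u) (e.symm ⁻¹' S) b where
  time := s.time ∘ e.symm
  caller := e ∘ s.caller ∘ e.symm
  time_source := by simpa using s.time_source
  time_le v hv := s.time_le _ hv
  caller_mem v hv hvu := by
    simpa using s.caller_mem _ hv (mt e.symm_apply_eq.1 hvu)
  adj_caller v hv hvu := by
    simpa using e.map_adj_iff.2 (s.adj_caller _ hv (mt e.symm_apply_eq.1 hvu))
  time_caller_lt v hv hvu := by
    simpa using s.time_caller_lt _ hv (mt e.symm_apply_eq.1 hvu)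
  eq_of_same_call v hv hvu w hw hwu htime hcaller :=
    e.symm.injective <| s.eq_of_same_call _ hv (mt e.symm_apply_eq.1 hvu) _ hw
      (mt e.symm_apply_eq.1 hwu) htime (e.injective hcaller)

theorem nonempty_extend (s : CallSchedule G u S b) (hu : u ∈ S) {n : ℕ} (time : V → ℕ)
    (caller : V → V) (time_pos : ∀ v ∉ S, 0 < time v) (time_le : ∀ v, time v ≤ n)
    (adj_caller : ∀ v ∉ S, G.Adj (caller v) v)
    (time_caller_lt : ∀ v ∉ S, time (caller v) < time v)
    (eq_of_same_call : ∀ v w, time v = time w → caller v = caller w → v = w) :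
    Nonempty (CallSchedule G u Set.univ (b + n)) := by
  classical
  refine ⟨{
    time := fun v => if v ∈ S then s.time v else b + time v
    caller := fun v => if v ∈ S then s.caller v else caller v
    time_source := by rw [if_pos hu, s.time_source]
    time_le := fun v _ => ?_
    caller_mem := fun _ _ _ => trivial
    adj_caller := fun v _ hvu => ?_
    time_caller_lt := fun v _ hvu => ?_
    eq_of_same_call := fun v _ hvu w _ hwu htime hcaller => ?_ }⟩
  · split_ifs with hv
    · exact (s.time_le v hv).trans (Nat.le_add_right b n)
    · exact Nat.add_le_add_left (time_le v) b
  · split_ifs with hv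
    · exact s.adj_caller v hv hvu
    · exact adj_caller v hv
  · by_cases hv : v ∈ S
    · simpa only [hv, s.caller_mem v hv hvu, if_true] using s.time_caller_lt v hv hvu
    · by_cases hw : caller v ∈ S <;> simp only [hv, hw, if_true, if_false]
      · exact (s.time_le _ hw).trans_lt (Nat.lt_add_of_pos_right (time_pos v hv))
      · exact Nat.add_lt_add_left (time_caller_lt v hv) b
  · by_cases hv : v ∈ S <;> by_cases hw : w ∈ S <;>
      simp only [hv, hw, if_true, if_false] at htime hcaller
    · exact s.eq_of_same_call v hv hvu w hw hwu htime hcaller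
    · exact absurd (htime ▸ s.time_le v hv) (by simpa using (time_pos w hw).ne')
    · exact absurd (htime ▸ s.time_le w hw) (by simpa using (time_pos v hv).ne')
    · exact eq_of_same_call v w (Nat.add_left_cancel htime) hcaller

end CallSchedule

/-! ### Binomial trees -/

section BinomialTree

variable {n : ℕ} (ρ : α ↪ Fin n)

/-- The step at which `D` is called when broadcasting from the root `∅` of the binomial tree on
`Finset α`, the dimensions being used in the order of their ranks `ρ`. -/
def binomialTime (D : Finset α) : ℕ := D.sup fun i => (ρ i : ℕ) + 1

/-- The parent of `D` in the binomial tree on `Finset α`: the element of highest rank is removed.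
The root `∅` is its own parent. -/
def binomialParent (D : Finset α) : Finset α := {i ∈ D | (ρ i : ℕ) + 1 < binomialTime ρ D}

theorem binomialTime_le (D : Finset α) : binomialTime ρ D ≤ n :=
  Finset.sup_le fun i _ => (ρ i).isLt

theorem binomialTime_pos {D : Finset α} (hD : D.Nonempty) : 0 < binomialTime ρ D :=
  let ⟨_, hi⟩ := hD
  (Nat.succ_pos _).trans_le (Finset.le_sup (f := fun i => (ρ i : ℕ) + 1) hi)

theorem binomialTime_parent_lt {D : Finset α} (hD : D.Nonempty) :
    binomialTime ρ (binomialParent ρ D) < binomialTime ρ D :=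
  (Finset.sup_lt_iff (binomialTime_pos ρ hD)).2 fun _ hi => (mem_filter.1 hi).2

theorem exists_binomialParent_eq_erase [DecidableEq α] {D : Finset α} (hD : D.Nonempty) :
    ∃ i ∈ D, (∀ e ∈ D, ρ e ≤ ρ i) ∧ binomialTime ρ D = ρ i + 1 ∧
      binomialParent ρ D = D.erase i := by
  obtain ⟨i, hi, hmax⟩ := D.exists_max_image ρ hD
  have htime : binomialTime ρ D = ρ i + 1 :=
    le_antisymm (Finset.sup_le fun e he => Nat.succ_le_succ (hmax e he))
      (Finset.le_sup (f := fun i => (ρ i : ℕ) + 1) hi)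
  refine ⟨i, hi, hmax, htime, ?_⟩
  ext e
  rw [binomialParent, htime, mem_filter, mem_erase, and_comm, Nat.add_lt_add_iff_right,
    Fin.val_fin_lt]
  refine and_congr_left fun he => ⟨fun h => ?_, fun h => ?_⟩
  · rintro rfl
    exact lt_irrefl _ h
  · exact (hmax e he).lt_of_ne (ρ.injective.ne h)

theorem binomialParent_singleton (i : α) : binomialParent ρ {i} = ∅ := by
  simp [binomialParent, binomialTime]

theorem binomialParent_ssubset {D : Finset α} (hD : D.Nonempty) : binomialParent ρ D ⊂ D := by
  classical
  obtain ⟨i, hi, -, -, hparent⟩ := exists_binomialParent_eq_erase ρ hD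
  exact hparent ▸ erase_ssubset hi

theorem binomial_ext {D E : Finset α} (htime : binomialTime ρ D = binomialTime ρ E)
    (hparent : binomialParent ρ D = binomialParent ρ E) : D = E := by
  classical
  rcases D.eq_empty_or_nonempty with rfl | hD
  · rcases E.eq_empty_or_nonempty with rfl | hE
    · rfl
    · exact absurd htime (binomialTime_pos ρ hE).ne
  rcases E.eq_empty_or_nonempty with rfl | hE
  · exact absurd htime (binomialTime_pos ρ hD).ne'
  obtain ⟨i, hi, -, hDtime, hDparent⟩ := exists_binomialParent_eq_erase ρ hD
  obtain ⟨j, hj, -, hEtime, hEparent⟩ := exists_binomialParent_eq_erase ρ hE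
  have hij : i = j := ρ.injective (Fin.ext (by omega))
  rw [← insert_erase hi, ← insert_erase hj, ← hDparent, ← hEparent, hparent, hij]

/-- `address` gives the places of the vertices of `S` in the binomial tree, whose own schedule is
then pulled back. -/
theorem nonempty_callSchedule_of_address {G : SimpleGraph V} {u : V} {S : Set V}
    (address : V → Finset α) (hu : u ∈ S) (haddress : address u = ∅) (hinj : S.InjOn address)
    (hparent : ∀ v ∈ S, v ≠ u →
      ∃ w ∈ S, address w = binomialParent ρ (address v) ∧ G.Adj w v) :
    Nonempty (CallSchedule G u S n) := by
  classical
  choose! caller caller_mem address_caller adj_caller using hparent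
  have nonempty_address {v : V} (hv : v ∈ S) (hvu : v ≠ u) : (address v).Nonempty := by
    rw [nonempty_iff_ne_empty, ← haddress]
    exact hinj.ne hv hu hvu
  exact ⟨{
    time := binomialTime ρ ∘ address
    caller := caller
    time_source := by simp [haddress, binomialTime]
    time_le := fun v _ => binomialTime_le ρ _
    caller_mem := caller_mem
    adj_caller := adj_caller
    time_caller_lt := fun v hv hvu => by
      rw [Function.comp_apply, address_caller v hv hvu]
      exact binomialTime_parent_lt ρ (nonempty_address hv hvu)
    eq_of_same_call := fun v hv hvu w hw hwu htime hcaller => hinj hv hw <|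
      binomial_ext ρ htime <| by
        rw [← address_caller v hv hvu, ← address_caller w hw hwu, hcaller] }⟩

theorem CallSchedule.nonempty_extend_trees {P : Type*} {G : SimpleGraph (P × Finset α)}
    {u : P × Finset α} {S : Set (P × Finset α)} {a : ℕ} (s : CallSchedule G u S a) (hu : u ∈ S)
    (hroot : ∀ p, (p, ∅) ∈ S)
    (hadj : ∀ p (x : Finset α), x.Nonempty → G.Adj (p, binomialParent ρ x) (p, x)) :
    Nonempty (CallSchedule G u Set.univ (a + n)) := by
  have nonempty_of_notMem {v : P × Finset α} (hv : v ∉ S) : v.2.Nonempty := by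
    rw [nonempty_iff_ne_empty]
    exact fun h => hv (by simpa [← h] using hroot v.1)
  refine s.nonempty_extend hu (fun v => binomialTime ρ v.2) (fun v => (v.1, binomialParent ρ v.2))
    (fun v hv => binomialTime_pos ρ (nonempty_of_notMem hv)) (fun v => binomialTime_le ρ v.2)
    (fun v hv => hadj v.1 v.2 (nonempty_of_notMem hv))
    (fun v hv => binomialTime_parent_lt ρ (nonempty_of_notMem hv)) fun v w htime hcaller => ?_
  rw [Prod.mk.injEq] at hcaller
  exact Prod.ext hcaller.1 (binomial_ext ρ htime hcaller.2)

end BinomialTree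

/-! ### The graph -/

theorem erase_eq_symmDiff_singleton [DecidableEq α] {s : Finset α} {i : α} (hi : i ∈ s) :
    s.erase i = s ∆ {i} := by
  rw [symmDiff_of_ge (singleton_subset_iff.2 hi), sdiff_singleton_eq_erase]

theorem symmDiff_singleton_covBy_or_covBy [DecidableEq α] (s : Finset α) (i : α) :
    s ∆ {i} ⋖ s ∨ s ⋖ s ∆ {i} := by
  by_cases hi : i ∈ s
  · exact .inl (erase_eq_symmDiff_singleton hi ▸ erase_covBy hi)
  · rw [(disjoint_singleton_right.2 hi).symmDiff_eq_sup, sup_eq_union, union_comm, ← insert_eq]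
    exact .inr (covBy_insert hi)

/-- The vertices of the `k`-dimensional hypercube other than zero. -/
abbrev CubePos (k : ℕ) : Type := {p : Finset (Fin k) // p.Nonempty}

/-- The vertex `(p, x)` is the vertex `x` of the binomial tree of order `m` hanging at the position
`p`; it is a root if `x = ∅`. -/
abbrev CubeTreeVertex (k m : ℕ) : Type := CubePos k × Finset (Fin m)

/-- The neighbour of the missing zero vertex along the dimension `i`. -/
def CubePos.unit {k : ℕ} (i : Fin k) : CubePos k := ⟨{i}, singleton_nonempty i⟩

theorem CubePos.unit_injective {k : ℕ} : Function.Injective (CubePos.unit (k := k)) :=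
  fun _ _ h => singleton_injective (congrArg Subtype.val h)

section CubeTreeGraph

variable {k m : ℕ}

open Classical in
/-- The neighbours of `v` that come before `v` in an acyclic orientation of the graph: for a root,
its lower neighbours in the hypercube; for any other vertex, its parent and its shortcuts to the
neighbours of the zero vertex, one of which is left out for the children of a root. -/
noncomputable def lowerNeighbors (v : CubeTreeVertex k m) : Finset (CubeTreeVertex k m) :=
  if v.2 = ∅ then ({q | q.1 ⋖ v.1.1} : Finset (CubePos k)) ×ˢ {∅}
  else insert (v.1, binomialParent (.refl (Fin m)) v.2)
    (({i | ¬(#v.2 = 1 ∧ i = v.1.1.min' v.1.2)} : Finset (Fin k)).image CubePos.unit ×ˢ {∅})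

/-- Binomial trees of order `m` hanging at the nonzero vertices of a `k`-dimensional hypercube, with
shortcuts from the non-root vertices to the neighbours of the zero vertex. -/
def cubeTreeGraph (k m : ℕ) : SimpleGraph (CubeTreeVertex k m) :=
  .fromRel fun v w => w ∈ lowerNeighbors v

theorem mem_lowerNeighbors_root {p : CubePos k} {w : CubeTreeVertex k m} :
    w ∈ lowerNeighbors (p, ∅) ↔ w.1.1 ⋖ p.1 ∧ w.2 = ∅ := by
  simp only [lowerNeighbors, if_true, mem_product, mem_filter_univ, mem_singleton]

theorem mem_lowerNeighbors_of_nonempty {p : CubePos k} {x : Finset (Fin m)} (hx : x.Nonempty)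
    {w : CubeTreeVertex k m} :
    w ∈ lowerNeighbors (p, x) ↔ w = (p, binomialParent (.refl (Fin m)) x) ∨
      ∃ i, ¬(#x = 1 ∧ i = p.1.min' p.2) ∧ w = (CubePos.unit i, ∅) := by
  simp only [lowerNeighbors, hx.ne_empty, if_false, mem_insert, mem_product, mem_image, mem_filter,
    mem_univ, true_and, mem_singleton, Prod.ext_iff, ← exists_and_right, and_assoc,
    eq_comm (a := CubePos.unit _)]

theorem swap_lt_swap_of_mem_lowerNeighbors {v w : CubeTreeVertex k m}
    (h : w ∈ lowerNeighbors v) : toLex w.swap < toLex v.swap := by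
  obtain ⟨p, x⟩ := v
  rw [Prod.Lex.toLex_lt_toLex]
  rcases x.eq_empty_or_nonempty with rfl | hx
  · obtain ⟨hlt, hw⟩ := mem_lowerNeighbors_root.1 h
    exact Or.inr ⟨hw, hlt.lt⟩
  · rcases (mem_lowerNeighbors_of_nonempty hx).1 h with rfl | ⟨i, -, rfl⟩
    · exact Or.inl (binomialParent_ssubset _ hx)
    · exact Or.inl (empty_ssubset.2 hx)

theorem cubeTreeGraph_adj_of_mem_lowerNeighbors {v w : CubeTreeVertex k m}
    (h : w ∈ lowerNeighbors v) : (cubeTreeGraph k m).Adj w v := by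
  refine (SimpleGraph.fromRel_adj _ _ _).2 ⟨?_, Or.inr h⟩
  rintro rfl
  exact lt_irrefl _ (swap_lt_swap_of_mem_lowerNeighbors h)

theorem cubeTreeGraph_adj_binomialParent (p : CubePos k) (x : Finset (Fin m)) (hx : x.Nonempty) :
    (cubeTreeGraph k m).Adj (p, binomialParent (.refl (Fin m)) x) (p, x) :=
  cubeTreeGraph_adj_of_mem_lowerNeighbors <|
    (mem_lowerNeighbors_of_nonempty hx).2 (Or.inl rfl)

theorem cubeTreeGraph_adj_unit (p : CubePos k) {x : Finset (Fin m)} (hx : x.Nonempty) {i : Fin k}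
    (hi : ¬(#x = 1 ∧ i = p.1.min' p.2)) : (cubeTreeGraph k m).Adj (p, x) (CubePos.unit i, ∅) :=
  (cubeTreeGraph_adj_of_mem_lowerNeighbors <|
    (mem_lowerNeighbors_of_nonempty hx).2 (Or.inr ⟨i, hi, rfl⟩)).symm

theorem cubeTreeGraph_adj_of_eq_symmDiff_singleton {p q : CubePos k} {i : Fin k}
    (h : q.1 = p.1 ∆ {i}) : (cubeTreeGraph k m).Adj (q, ∅) (p, ∅) := by
  rcases symmDiff_singleton_covBy_or_covBy p.1 i with hcov | hcov
  · exact cubeTreeGraph_adj_of_mem_lowerNeighbors (mem_lowerNeighbors_root.2 ⟨h ▸ hcov, rfl⟩)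
  · exact (cubeTreeGraph_adj_of_mem_lowerNeighbors
      (mem_lowerNeighbors_root.2 ⟨h ▸ hcov, rfl⟩)).symm

/-! ### Broadcasting -/

variable (k m) in
/-- The roots of the binomial trees. -/
def roots : Set (CubeTreeVertex k m) := {v | v.2 = ∅}

/-- The translation by `c` of the half of the hypercube whose positions contain `j`. For
`c = p.erase j` it exchanges `{j}` with `p`, so that a call to `p` can replace a call to `{j}`. -/
def halfTranslate [DecidableEq α] (j : α) (c s : Finset α) : Finset α := if j ∈ s then s ∆ c else s

section HalfTranslate

variable [DecidableEq α] {j : α} {c : Finset α}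

theorem halfTranslate_halfTranslate (hj : j ∉ c) (s : Finset α) :
    halfTranslate j c (halfTranslate j c s) = s := by
  by_cases hs : j ∈ s <;> simp [halfTranslate, hs, hj, mem_symmDiff]

theorem halfTranslate_nonempty (hj : j ∉ c) {s : Finset α} (hs : s.Nonempty) :
    (halfTranslate j c s).Nonempty := by
  rw [nonempty_iff_ne_empty] at hs ⊢
  intro h
  apply hs
  rw [← halfTranslate_halfTranslate hj s, h]
  simp [halfTranslate]

theorem halfTranslate_symmDiff_singleton {i : α} (hij : i ≠ j) (s : Finset α) :
    halfTranslate j c (s ∆ {i}) = halfTranslate j c s ∆ {i} := by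
  have hmem : j ∈ s ∆ {i} ↔ j ∈ s := by simp [mem_symmDiff, hij.symm]
  by_cases hs : j ∈ s <;> simp [halfTranslate, hmem, hs, symmDiff_right_comm]

theorem halfTranslate_erase_singleton {s : Finset α} (hj : j ∈ s) :
    halfTranslate j (s.erase j) {j} = s := by
  rw [halfTranslate, if_pos (mem_singleton_self j), erase_eq_symmDiff_singleton hj, symmDiff_comm,
    symmDiff_symmDiff_cancel_right]

end HalfTranslate

theorem exists_ranking_forall_le (j : Fin k) : ∃ ρ : Fin k ↪ Fin k, ∀ i, ρ j ≤ ρ i := by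
  cases k with
  | zero => exact j.elim0
  | succ k => exact ⟨(Equiv.swap j 0).toEmbedding, fun i => by simp⟩

theorem exists_ranking_forall_ge (j : Fin k) : ∃ ρ : Fin k ↪ Fin k, ∀ i, ρ i ≤ ρ j := by
  cases k with
  | zero => exact j.elim0
  | succ k => exact ⟨(Equiv.swap j (Fin.last k)).toEmbedding, fun i => by simp [Fin.le_last]⟩

theorem nonempty_callSchedule_roots_of_root (p₀ : CubePos k) :
    Nonempty (CallSchedule (cubeTreeGraph k m) (p₀, ∅) (roots k m) k) := by
  obtain ⟨j, hj⟩ := p₀.2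
  obtain ⟨ρ, hρ⟩ := exists_ranking_forall_ge j
  refine nonempty_callSchedule_of_address ρ (fun v => v.1.1 ∆ p₀.1) rfl (symmDiff_self _) ?_ ?_
  · rintro ⟨p, _⟩ rfl ⟨q, _⟩ rfl hpq
    exact Prod.ext (Subtype.ext (symmDiff_left_injective _ hpq)) rfl
  · rintro ⟨p, _⟩ rfl hp
    have haddress : (p.1 ∆ p₀.1).Nonempty := by
      rw [nonempty_iff_ne_empty]
      exact fun h => hp (by rw [Subtype.ext (symmDiff_eq_bot.1 h)])
    obtain ⟨i, hi, hmax, -, hparent⟩ := exists_binomialParent_eq_erase ρ haddress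
    have hji : j ∈ p.1 ∆ {i} := by
      by_cases hij : i = j
      · subst hij
        simpa [mem_symmDiff, hj] using hi
      · have hj' : j ∉ p.1 ∆ p₀.1 := fun h =>
          hij (ρ.injective (le_antisymm (hρ i) (hmax j h)))
        simp only [mem_symmDiff, mem_singleton] at hj' ⊢
        tauto
    refine ⟨(⟨p.1 ∆ {i}, j, hji⟩, ∅), rfl, ?_, cubeTreeGraph_adj_of_eq_symmDiff_singleton rfl⟩
    rw [hparent, erase_eq_symmDiff_singleton hi, symmDiff_right_comm]

theorem cubeTreeGraph_adj_of_eq_halfTranslate_singleton {u : CubeTreeVertex k m} {i j : Fin k}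
    {p q : CubePos k} (hj : j ∈ p.1) (hp : (cubeTreeGraph k m).Adj u (p, ∅))
    (hunit : ∀ i ≠ j, (cubeTreeGraph k m).Adj u (CubePos.unit i, ∅))
    (hq : q.1 = halfTranslate j (p.1.erase j) {i}) : (cubeTreeGraph k m).Adj u (q, ∅) := by
  rcases eq_or_ne i j with rfl | hij
  · rwa [show q = p from Subtype.ext (hq.trans (halfTranslate_erase_singleton hj))]
  · rw [show q = CubePos.unit i from Subtype.ext <|
      hq.trans (if_neg (mt mem_singleton.1 hij.symm))]
    exact hunit i hij

theorem nonempty_callSchedule_roots_of_adj {u : CubeTreeVertex k m} (hu : u.2.Nonempty) {j : Fin k}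
    {p : CubePos k} (hj : j ∈ p.1) (hp : (cubeTreeGraph k m).Adj u (p, ∅))
    (hunit : ∀ i ≠ j, (cubeTreeGraph k m).Adj u (CubePos.unit i, ∅)) :
    Nonempty (CallSchedule (cubeTreeGraph k m) u (insert u (roots k m)) k) := by
  obtain ⟨ρ, hρ⟩ := exists_ranking_forall_le j
  set φ := halfTranslate j (p.1.erase j) with hφ
  have hφ_invol (s : Finset (Fin k)) : φ (φ s) = s := halfTranslate_halfTranslate (by simp) s
  have hφ_nonempty {s : Finset (Fin k)} (hs : s.Nonempty) : (φ s).Nonempty :=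
    halfTranslate_nonempty (by simp) hs
  let address (v : CubeTreeVertex k m) : Finset (Fin k) := if v.2 = ∅ then φ v.1.1 else ∅
  have address_source : address u = ∅ := if_neg hu.ne_empty
  have address_root (q : CubePos k) : address (q, ∅) = φ q.1 := if_pos rfl
  refine nonempty_callSchedule_of_address ρ address (Set.mem_insert _ _) address_source ?_ ?_
  · have hu_roots : u ∉ roots k m := hu.ne_empty
    refine (Set.injOn_insert hu_roots).2 ⟨?_, ?_⟩
    · rintro ⟨q, _⟩ rfl ⟨r, _⟩ rfl hqr
      rw [address_root, address_root] at hqr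
      rw [Subtype.ext (Function.LeftInverse.injective hφ_invol hqr)]
    · rintro ⟨⟨q, _⟩, rfl, hq⟩
      rw [address_source, address_root] at hq
      exact (hφ_nonempty q.2).ne_empty hq
  · rintro ⟨q, _⟩ (h | rfl) hqu
    · exact absurd h hqu
    obtain ⟨i, hi, hmax, -, hparent⟩ := exists_binomialParent_eq_erase ρ (hφ_nonempty q.2)
    rw [address_root, hparent]
    rcases ((φ q.1).erase i).eq_empty_or_nonempty with he | he
    · have hq : q.1 = φ {i} := by
        rw [← hφ_invol q.1, ← insert_erase hi, he, insert_empty_eq]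
      exact ⟨u, Set.mem_insert _ _, by rw [address_source, he],
        cubeTreeGraph_adj_of_eq_halfTranslate_singleton hj hp hunit hq⟩
    · have hij : i ≠ j := by
        rintro rfl
        obtain ⟨e, he⟩ := he
        rw [mem_erase] at he
        exact he.1 (ρ.injective ((hmax e he.2).antisymm (hρ e)))
      have hφ_erase : φ ((φ q.1).erase i) = q.1 ∆ {i} := by
        rw [erase_eq_symmDiff_singleton hi, hφ, halfTranslate_symmDiff_singleton hij, ← hφ,
          hφ_invol]
      refine ⟨(⟨_, hφ_nonempty he⟩, ∅), Or.inr rfl, (address_root _).trans (hφ_invol _),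
        cubeTreeGraph_adj_of_eq_symmDiff_singleton hφ_erase⟩

theorem nonempty_callSchedule_roots (u : CubeTreeVertex k m) :
    Nonempty (CallSchedule (cubeTreeGraph k m) u (insert u (roots k m)) k) := by
  obtain ⟨p, x⟩ := u
  rcases x.eq_empty_or_nonempty with rfl | hx
  · rw [Set.insert_eq_of_mem (show (p, ∅) ∈ roots k m from rfl)]
    exact nonempty_callSchedule_roots_of_root p
  set j := p.1.min' p.2
  have hunit {i : Fin k} (hi : ¬(#x = 1 ∧ i = j)) :
      (cubeTreeGraph k m).Adj (p, x) (CubePos.unit i, ∅) := cubeTreeGraph_adj_unit p hx hi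
  by_cases hcard : #x = 1
  · refine nonempty_callSchedule_roots_of_adj hx (p.1.min'_mem p.2) ?_
      fun i hi => hunit fun h => hi h.2
    obtain ⟨a, rfl⟩ := card_eq_one.1 hcard
    simpa only [binomialParent_singleton] using
      (cubeTreeGraph_adj_binomialParent p {a} hx).symm
  · exact nonempty_callSchedule_roots_of_adj hx (mem_singleton_self j)
      (hunit fun h => hcard h.1) fun i _ => hunit fun h => hcard h.1

theorem nonempty_callSchedule_cubeTreeGraph (u : CubeTreeVertex k m) :
    Nonempty (CallSchedule (cubeTreeGraph k m) u Set.univ (k + m)) :=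
  let ⟨s⟩ := nonempty_callSchedule_roots u
  s.nonempty_extend_trees (.refl (Fin m)) (Set.mem_insert _ _) (fun _ => Or.inr rfl)
    cubeTreeGraph_adj_binomialParent

/-! ### Counting edges -/

theorem ncard_edgeSet_fromRel [Fintype V] (out : V → Finset V)
    (hout : ∀ v w, w ∈ out v → v ∉ out w) :
    (SimpleGraph.fromRel fun v w => w ∈ out v).edgeSet.ncard = ∑ v, #(out v) := by
  classical
  have hedge : (SimpleGraph.fromRel fun v w => w ∈ out v).edgeSet =
      ((univ.sigma out).image fun e => s(e.1, e.2) : Finset (Sym2 V)) := by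
    ext e
    induction e using Sym2.ind with
    | _ v w =>
      rw [SimpleGraph.mem_edgeSet, SimpleGraph.fromRel_adj, mem_coe, mem_image]
      refine ⟨?_, ?_⟩
      · rintro ⟨-, h | h⟩
        · exact ⟨⟨v, w⟩, mem_sigma.2 ⟨mem_univ v, h⟩, rfl⟩
        · exact ⟨⟨w, v⟩, mem_sigma.2 ⟨mem_univ w, h⟩, Sym2.eq_swap⟩
      · rintro ⟨⟨a, b⟩, hab, h⟩
        have hb : b ∈ out a := (mem_sigma.1 hab).2
        have hne : a ≠ b := by
          rintro rfl
          exact hout a a hb hb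
        rcases Sym2.eq_iff.1 h with ⟨rfl, rfl⟩ | ⟨rfl, rfl⟩
        · exact ⟨hne, Or.inl hb⟩
        · exact ⟨hne.symm, Or.inr hb⟩
  have hinj : Set.InjOn (fun e : Σ _ : V, V => s(e.1, e.2)) (univ.sigma out : Finset _) := by
    rintro ⟨v, w⟩ hvw ⟨v', w'⟩ hvw' h
    rcases Sym2.eq_iff.1 h with ⟨rfl, rfl⟩ | ⟨rfl, rfl⟩
    · rfl
    · exact absurd (mem_sigma.1 hvw').2 (hout _ _ (mem_sigma.1 hvw).2)
  rw [hedge, Set.ncard_coe_finset, card_image_of_injOn hinj, card_sigma]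

theorem card_filter_covBy [Fintype α] (s : Finset α) [DecidablePred (· ⋖ s)] :
    #{t | t ⋖ s} = #s := by
  classical
  rw [← card_image_of_injOn (erase_injOn s)]
  congr 1
  ext t
  simp [covBy_iff_exists_erase]

theorem sum_nonempty [Fintype α] {M : Type*} [AddCommGroup M] (f : Finset α → M) :
    ∑ s : {s : Finset α // s.Nonempty}, f s = ∑ s, f s - f ∅ := by
  classical
  rw [← sum_erase_eq_sub (mem_univ ∅)]
  exact (sum_subtype _ (fun s => by simp [nonempty_iff_ne_empty]) f).symm

theorem sum_card_finset [Fintype α] :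
    ∑ s : Finset α, #s = Fintype.card α * 2 ^ (Fintype.card α - 1) := by
  classical
  rw [← powerset_univ, sum_powerset_apply_card (fun n => n)]
  simpa [mul_comm] using Nat.sum_range_mul_choose (Fintype.card α)

theorem card_cubePos : (Fintype.card (CubePos k) : ℤ) = 2 ^ k - 1 := by
  simpa using sum_nonempty (α := Fin k) fun _ => (1 : ℤ)

theorem card_cubeTreeVertex :
    (Fintype.card (CubeTreeVertex k m) : ℤ) = (2 ^ k - 1) * 2 ^ m := by
  rw [Fintype.card_prod, Nat.cast_mul, card_cubePos, Fintype.card_finset, Fintype.card_fin,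
    Nat.cast_pow, Nat.cast_ofNat]

theorem card_lowerNeighbors_root (p : CubePos k) :
    (#(lowerNeighbors ((p, ∅) : CubeTreeVertex k m)) : ℤ) = #p.1 - if #p.1 = 1 then 1 else 0 := by
  classical
  have hempty : (∅ : Finset (Fin k)) ⋖ p.1 ↔ #p.1 = 1 := by
    rw [← bot_eq_empty, bot_covBy_iff, Finset.isAtom_iff, card_eq_one]
  calc (#(lowerNeighbors ((p, ∅) : CubeTreeVertex k m)) : ℤ)
      = ∑ q : CubePos k, if q.1 ⋖ p.1 then 1 else 0 := by
        simp [lowerNeighbors]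
    _ = #{q | q ⋖ p.1} - if ∅ ⋖ p.1 then 1 else 0 := by
        rw [sum_nonempty fun q => if q ⋖ p.1 then (1 : ℤ) else 0]
        simp
    _ = #p.1 - if #p.1 = 1 then 1 else 0 := by
        simp only [card_filter_covBy, hempty]

theorem card_lowerNeighbors_of_nonempty (p : CubePos k) {x : Finset (Fin m)} (hx : x.Nonempty) :
    (#(lowerNeighbors (p, x)) : ℤ) = k + 1 - if #x = 1 then 1 else 0 := by
  classical
  have parent_notMem : (p, binomialParent (.refl (Fin m)) x) ∉
      ({i | ¬(#x = 1 ∧ i = p.1.min' p.2)} : Finset (Fin k)).image CubePos.unit ×ˢ {∅} := by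
    simp only [mem_product, mem_image, mem_filter_univ, mem_singleton]
    rintro ⟨⟨i, hi, rfl⟩, hparent⟩
    refine hi ⟨?_, (min'_singleton i).symm⟩
    obtain ⟨j, hj, -, -, h⟩ := exists_binomialParent_eq_erase (.refl (Fin m)) hx
    rw [← insert_erase hj, ← h, hparent, insert_empty_eq, card_singleton]
  have card_shortcuts : (#{i : Fin k | ¬(#x = 1 ∧ i = p.1.min' p.2)} : ℤ) =
      k - if #x = 1 then 1 else 0 := by
    by_cases hcard : #x = 1
    · simp [hcard, filter_ne', card_erase_of_mem, Nat.cast_pred (p.1.min' p.2).pos]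
    · simp [hcard]
  rw [lowerNeighbors, if_neg hx.ne_empty, card_insert_of_notMem parent_notMem, card_product,
    card_image_of_injective _ CubePos.unit_injective, card_singleton, mul_one, Nat.cast_succ,
    card_shortcuts]
  ring

theorem sum_card_lowerNeighbors (p : CubePos k) :
    ∑ x : Finset (Fin m), (#(lowerNeighbors (p, x)) : ℤ) =
      #p.1 - (if #p.1 = 1 then 1 else 0) + ((2 ^ m - 1) * (k + 1) - m) := by
  have htree : ∑ x : {x : Finset (Fin m) // x.Nonempty}, (#(lowerNeighbors (p, x.1)) : ℤ) =
      (2 ^ m - 1) * (k + 1) - m := by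
    simp_rw [fun x : {x : Finset (Fin m) // x.Nonempty} => card_lowerNeighbors_of_nonempty p x.2]
    rw [sum_nonempty fun x => (k + 1 - if #x = 1 then 1 else 0 : ℤ)]
    simp only [sum_sub_distrib, sum_const, card_univ, Fintype.card_finset, Fintype.card_fin,
      Int.nsmul_eq_mul, Nat.cast_pow, Nat.cast_ofNat, sum_boole, univ_filter_card_eq,
      card_powersetCard, Nat.choose_one_right, card_empty, zero_ne_one, if_false, sub_zero]
    ring
  rw [← card_lowerNeighbors_root (m := m), ← htree,
    sum_nonempty fun x => (#(lowerNeighbors (p, x)) : ℤ)]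
  ring

theorem ncard_edgeSet_cubeTreeGraph :
    ((cubeTreeGraph k m).edgeSet.ncard : ℤ) =
      k * 2 ^ (k - 1) - k + (2 ^ k - 1) * ((2 ^ m - 1) * (k + 1) - m) := by
  have hasymm (v w : CubeTreeVertex k m) (hw : w ∈ lowerNeighbors v) : v ∉ lowerNeighbors w :=
    fun hv => lt_asymm (swap_lt_swap_of_mem_lowerNeighbors hw)
      (swap_lt_swap_of_mem_lowerNeighbors hv)
  have hcube : ∑ p : CubePos k, (#p.1 - if #p.1 = 1 then 1 else 0 : ℤ) = k * 2 ^ (k - 1) - k := by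
    rw [sum_nonempty fun s => (#s - if #s = 1 then 1 else 0 : ℤ), sum_sub_distrib,
      ← Nat.cast_sum, sum_card_finset]
    simp
  rw [cubeTreeGraph, ncard_edgeSet_fromRel _ hasymm, Nat.cast_sum, Fintype.sum_prod_type]
  simp_rw [sum_card_lowerNeighbors]
  rw [sum_add_distrib, hcube, sum_const, card_univ, nsmul_eq_mul, card_cubePos]

end CubeTreeGraph

theorem exists_broadcast_graph_of_N_general (t k N : ℕ) (hk : 1 ≤ k) (hkt : k ≤ t + 1)
    (hN : N = (2 ^ k - 1) * 2 ^ (t + 1 - k)) :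
    ∃ G : SimpleGraph (Fin N), G.Connected ∧
      (G.edgeSet.ncard : ℤ) = (k + 1) * N - (2 * t - k + 4) * 2 ^ (k - 1) + t - k + 2 ∧
      ∀ u, broadcastTime G u ≤ t + 1 := by
  set m := t + 1 - k with hm
  have hNcast : (N : ℤ) = (2 ^ k - 1) * 2 ^ m := by
    rw [hN, Nat.cast_mul, Nat.cast_pred (Nat.two_pow_pos k)]
    push_cast
    rfl
  have hcard : Fintype.card (CubeTreeVertex k m) = N := by
    rw [← Nat.cast_inj (R := ℤ), hNcast, card_cubeTreeVertex]
  let e := (cubeTreeGraph k m).overFinIso hcard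
  have schedule (u : Fin N) :
      Nonempty (CallSchedule ((cubeTreeGraph k m).overFin hcard) u Set.univ (t + 1)) := by
    obtain ⟨s⟩ := nonempty_callSchedule_cubeTreeGraph (e.symm u)
    simpa [hm, Nat.add_sub_cancel' hkt] using Nonempty.intro (s.map e)
  have : Nonempty (Fin N) := e.nonempty_congr.1 ⟨(CubePos.unit ⟨0, hk⟩, ∅)⟩
  refine ⟨_, ⟨fun u v => (schedule u).some.reachable (Set.mem_univ v)⟩, ?_,
    fun u => (schedule u).some.broadcastTime_le⟩
  rw [← Nat.card_coe_set_eq, ← Nat.card_congr e.mapEdgeSet, Nat.card_coe_set_eq,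
    ncard_edgeSet_cubeTreeGraph, hNcast]
  obtain ⟨j, rfl⟩ := Nat.exists_eq_add_of_le' hk
  have ht : (t : ℤ) = m + j := by omega
  rw [ht]
  push_cast
  ring

/-- For `t ≥ 7`, `2 ≤ k ≤ ⌊t/2⌋ - 1` and `N = (2^k - 1)·2^(t+1-k)`, there is a connected
graph on `N` vertices with exactly `(k+1)·N - (2t - k + 4)·2^(k-1) + t - k + 2` edges in
which every vertex has broadcast time at most `t + 1`. -/
theorem exists_broadcast_graph_of_N (t k N : ℕ) (ht : 7 ≤ t) (hk : 2 ≤ k)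
    (hk' : k ≤ t / 2 - 1) (hN : N = (2 ^ k - 1) * 2 ^ (t + 1 - k)) :
    ∃ G : SimpleGraph (Fin N), G.Connected ∧
      (G.edgeSet.ncard : ℤ) = (k + 1) * N - (2 * t - k + 4) * 2 ^ (k - 1) + t - k + 2 ∧
      ∀ u, broadcastTime G u ≤ t + 1 :=
  exists_broadcast_graph_of_N_general t k N (by omega) (by omega) hN
end
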